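/- arXiv:2310.09654 — 7 statements merged into one kernel-verified Lean document; each statement's English description precedes it below -/
import Mathlib

section
/- Let A be a commutative ring and suppose that for every i ∈ ℕ and every nonempty finite subset S of ℕ an element g^i_S ∈ A is given, satisfying g^i_S = 0 whenever |S| ≥ i + 2. For integers j ≥ 1 and i ≥ 0 define f^i_j := Σ_{π ⊢ [j]} Σ_{(i_Q)_{Q∈π} : Σ_Q i_Q = i} Π_{Q ∈ π} g^{i_Q}_Q, where the middle sum is over all assignments of natural numbers i_Q to the blocks Q of π summing to i. Then f^i_j = Σ_{P ⊆ [j], |P| ≤ 2i} Σ_{π ⊢ P} Σ_{(i_Q)_{Q∈π} : i_Q ≥ 1, Σ_Q i_Q = i} ( Π_{k ∈ [j]∖P} g^0_{{k}} ) · Π_{Q ∈ π} g^{i_Q}_Q, where for P = ∅ the inner sum consists of the single empty product (occurring only when i = 0). -/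
open Finset in
lemma aux_coeff {A : Type*} [CommRing A] (G : ℕ → Finset ℕ → A) (i : ℕ) (s : Finset (Finset ℕ)) :
    (∑ c : {Q // Q ∈ s} → Fin (i + 1),
      if (∑ Q : {Q // Q ∈ s}, (c Q : ℕ)) = i then ∏ Q : {Q // Q ∈ s}, G (c Q : ℕ) Q.1 else 0)
    = (∏ Q ∈ s, ∑ k : Fin (i + 1),
        Polynomial.C (G k Q) * (Polynomial.X : Polynomial A) ^ (k : ℕ)).coeff i := by
  classical
  rw [← Finset.prod_coe_sort s, Finset.prod_univ_sum, Polynomial.finsetSum_coeff,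
    Fintype.piFinset_univ]
  refine Finset.sum_congr rfl fun c _ => ?_
  rw [Finset.prod_mul_distrib, Finset.prod_pow_eq_pow_sum, ← map_prod,
    Polynomial.coeff_C_mul_X_pow]
  simp only [eq_comm]

/-- Add all singletons of `s \ P` to a partition of `P`. -/
def auxExt {s P : Finset ℕ} (hP : P ⊆ s) (π : Finpartition P) : Finpartition s :=
  Finpartition.ofExistsUnique (π.parts ∪ (s \ P).image (fun k => ({k} : Finset ℕ)))
    (by
      intro p hp
      rcases Finset.mem_union.1 hp with h | h
      · exact (π.subset h).trans hP
      · obtain ⟨k, hk, rfl⟩ := Finset.mem_image.1 h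
        exact Finset.singleton_subset_iff.2 (Finset.mem_sdiff.1 hk).1)
    (by
      intro a ha
      by_cases haP : a ∈ P
      · obtain ⟨t, ht, hat⟩ := π.exists_mem haP
        refine ⟨t, ⟨Finset.mem_union_left _ ht, hat⟩, ?_⟩
        rintro u ⟨hu, hau⟩
        rcases Finset.mem_union.1 hu with h | h
        · exact π.eq_of_mem_parts h ht hau hat
        · obtain ⟨k, hk, rfl⟩ := Finset.mem_image.1 h
          rw [Finset.mem_singleton] at hau
          subst hau
          exact absurd haP (Finset.mem_sdiff.1 hk).2
      · refine ⟨{a}, ⟨Finset.mem_union_right _ (Finset.mem_image.2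
          ⟨a, Finset.mem_sdiff.2 ⟨ha, haP⟩, rfl⟩), Finset.mem_singleton_self a⟩, ?_⟩
        rintro u ⟨hu, hau⟩
        rcases Finset.mem_union.1 hu with h | h
        · exact absurd (π.subset h hau) haP
        · obtain ⟨k, hk, rfl⟩ := Finset.mem_image.1 h
          rw [Finset.mem_singleton] at hau
          rw [hau])
    (by
      intro h
      rcases Finset.mem_union.1 h with h | h
      · exact π.empty_notMem_parts h
      · obtain ⟨k, hk, hk2⟩ := Finset.mem_image.1 h
        exact Finset.singleton_ne_empty k hk2)

lemma auxExt_parts {s P : Finset ℕ} (hP : P ⊆ s) (π : Finpartition P) :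
    (auxExt hP π).parts = π.parts ∪ (s \ P).image (fun k => ({k} : Finset ℕ)) := rfl

lemma auxExt_sdiff {s P : Finset ℕ} (hP : P ⊆ s) (π : Finpartition P) :
    (auxExt hP π).parts \ π.parts = (s \ P).image (fun k => ({k} : Finset ℕ)) := by
  rw [auxExt_parts, Finset.union_sdiff_left, Finset.sdiff_eq_self_iff_disjoint,
    Finset.disjoint_left]
  intro a ha ha'
  obtain ⟨k, hk, rfl⟩ := Finset.mem_image.1 ha
  exact (Finset.mem_sdiff.1 hk).2 (π.subset ha' (Finset.mem_singleton_self k))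

lemma aux_part {R : Type*} [CommRing R] (s : Finset ℕ) (h0 h1 : Finset ℕ → R)
    (hh : ∀ Q : Finset ℕ, 2 ≤ Q.card → h0 Q = 0) :
    ∑ π : Finpartition s, ∏ Q ∈ π.parts, (h1 Q + h0 Q)
      = ∑ P ∈ s.powerset, ∑ π : Finpartition P,
        (∏ k ∈ s \ P, h0 {k}) * ∏ Q ∈ π.parts, h1 Q := by
  classical
  simp_rw [Finset.prod_add]
  rw [Finset.sum_sigma', Finset.sum_sigma']
  symm
  rw [← Finset.sum_attach]
  refine Finset.sum_of_injOn
    (fun x => ⟨auxExt (Finset.mem_powerset.1 (Finset.mem_sigma.1 x.2).1) x.1.2, x.1.2.parts⟩)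
    ?_ ?_ ?_ ?_
  · rintro ⟨⟨P, π⟩, hx⟩ - ⟨⟨P', π'⟩, hx'⟩ - h
    have h2 : π.parts = π'.parts := by
      have := congrArg (fun z : (_ : Finpartition s) × Finset (Finset ℕ) => z.2) h
      exact this
    have hPP : P = P' := by rw [← π.sup_parts, ← π'.sup_parts, h2]
    subst hPP
    have : π = π' := Finpartition.ext h2
    subst this
    rfl
  · rintro ⟨⟨P, π⟩, hx⟩ -
    simp [auxExt_parts]
  · rintro ⟨π, T⟩ hT hn
    have hT' : T ⊆ π.parts := by simpa using hT
    by_cases hs : ∀ Q ∈ π.parts \ T, Q.card < 2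
    · exfalso
      apply hn
      have hPs : T.sup id ⊆ s := by
        have := Finset.sup_mono (f := id) hT'
        rw [π.sup_parts] at this
        exact this
      refine ⟨⟨⟨T.sup id, π.ofSubset hT' rfl⟩, ?_⟩, by simp, ?_⟩
      · simpa using hPs
      · have hkey : auxExt hPs (π.ofSubset hT' rfl) = π := by
          apply Finpartition.ext
          rw [auxExt_parts]
          change T ∪ _ = _
          ext Q
          simp only [Finset.mem_union, Finset.mem_image, Finset.mem_sdiff, Finset.mem_sup, id]
          constructor
          · rintro (h | ⟨k, ⟨hk, hk'⟩, rfl⟩)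
            · exact hT' h
            · obtain ⟨t, ht, hkt⟩ := π.exists_mem hk
              have htT : t ∉ T := fun h => hk' ⟨t, h, hkt⟩
              have hc := hs t (Finset.mem_sdiff.2 ⟨ht, htT⟩)
              have : {k} = t := Finset.eq_of_subset_of_card_le
                (Finset.singleton_subset_iff.2 hkt) (by simp; omega)
              rwa [this]
          · intro hQ
            by_cases hQT : Q ∈ T
            · exact Or.inl hQT
            · right
              have hc := hs Q (Finset.mem_sdiff.2 ⟨hQ, hQT⟩)
              obtain ⟨k, hk⟩ := π.nonempty_of_mem_parts hQ
              have hkQ : {k} = Q := Finset.eq_of_subset_of_card_le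
                (Finset.singleton_subset_iff.2 hk) (by simp; omega)
              refine ⟨k, ⟨π.subset hQ hk, ?_⟩, hkQ⟩
              rintro ⟨t, ht, hkt⟩
              exact hQT (π.eq_of_mem_parts (hT' ht) hQ hkt hk ▸ ht)
        exact Sigma.ext hkey HEq.rfl
    · push Not at hs
      obtain ⟨Q, hQ, hc⟩ := hs
      rw [Finset.prod_eq_zero hQ (hh Q hc), mul_zero]
  · rintro ⟨⟨P, π⟩, hx⟩ -
    have hP := Finset.mem_powerset.1 (Finset.mem_sigma.1 hx).1
    change _ = (∏ Q ∈ π.parts, h1 Q) * ∏ Q ∈ (auxExt hP π).parts \ π.parts, h0 Q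
    rw [auxExt_sdiff, Finset.prod_image (by intro a _ b _ h; exact Finset.singleton_injective h),
      mul_comm]

/-- Representation of the `i`-th order perturbative correction `f^i_j` in terms of the
perturbative cluster functions `g^i_S`, using that `g^i_S = 0` whenever `|S| ≥ i + 2`.
Here `[j] = Finset.Icc 1 j`, partitions are `Finpartition`s, and an assignment of orders
to the blocks of a partition `π` is encoded as a function `{Q // Q ∈ π.parts} → Fin (i+1)`
(every assignment of naturals summing to `i` has all values at most `i`). -/
theorem f_ij_representation {A : Type*} [CommRing A] (g : ℕ → Finset ℕ → A)
    (hg : ∀ i : ℕ, ∀ S : Finset ℕ, i + 2 ≤ S.card → g i S = 0)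
    (j : ℕ) (hj : 1 ≤ j) (i : ℕ) :
    (∑ π : Finpartition (Finset.Icc 1 j),
        ∑ c : {Q // Q ∈ π.parts} → Fin (i + 1),
          if (∑ Q : {Q // Q ∈ π.parts}, (c Q : ℕ)) = i then
            ∏ Q : {Q // Q ∈ π.parts}, g (c Q : ℕ) Q.1
          else 0)
      = ∑ P ∈ (Finset.Icc 1 j).powerset.filter (fun P => P.card ≤ 2 * i),
          ∑ π : Finpartition P,
            ∑ c : {Q // Q ∈ π.parts} → Fin (i + 1),
              if (∀ Q : {Q // Q ∈ π.parts}, 1 ≤ (c Q : ℕ)) ∧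
                  (∑ Q : {Q // Q ∈ π.parts}, (c Q : ℕ)) = i then
                (∏ k ∈ Finset.Icc 1 j \ P, g 0 {k}) *
                  ∏ Q : {Q // Q ∈ π.parts}, g (c Q : ℕ) Q.1
              else 0 := by
  classical
  set G : ℕ → Finset ℕ → A := fun k Q => if k = 0 then 0 else g k Q with hG
  have hR : ∀ P : Finset ℕ, (∑ π : Finpartition P,
            ∑ c : {Q // Q ∈ π.parts} → Fin (i + 1),
              if (∀ Q : {Q // Q ∈ π.parts}, 1 ≤ (c Q : ℕ)) ∧
                  (∑ Q : {Q // Q ∈ π.parts}, (c Q : ℕ)) = i then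
                (∏ k ∈ Finset.Icc 1 j \ P, g 0 {k}) *
                  ∏ Q : {Q // Q ∈ π.parts}, g (c Q : ℕ) Q.1
              else 0) = (∑ π : Finpartition P,
                (∏ k ∈ Finset.Icc 1 j \ P, Polynomial.C (g 0 {k})) *
                ∏ Q ∈ π.parts, ∑ k : Fin (i + 1),
                Polynomial.C (G k Q) * (Polynomial.X : Polynomial A) ^ (k : ℕ)).coeff i := by
    intro P
    rw [Polynomial.finsetSum_coeff]
    refine Finset.sum_congr rfl fun π _ => ?_
    rw [← map_prod, Polynomial.coeff_C_mul, ← aux_coeff, Finset.mul_sum]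
    refine Finset.sum_congr rfl fun c _ => ?_
    by_cases h1 : ∀ Q : {Q // Q ∈ π.parts}, 1 ≤ (c Q : ℕ)
    · have : ∏ Q : {Q // Q ∈ π.parts}, G (c Q : ℕ) Q.1
          = ∏ Q : {Q // Q ∈ π.parts}, g (c Q : ℕ) Q.1 :=
        Finset.prod_congr rfl fun Q _ => if_neg (by have := h1 Q; omega)
      rw [this]
      simp only [h1, implies_true, true_and, mul_ite, mul_zero]
    · rw [if_neg (fun h => h1 h.1)]
      push Not at h1
      obtain ⟨Q, hQ⟩ := h1
      have hz : G (c Q : ℕ) Q.1 = 0 := if_pos (by omega)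
      have hp : ∏ Q : {Q // Q ∈ π.parts}, G (c Q : ℕ) Q.1 = 0 :=
        Finset.prod_eq_zero (Finset.mem_univ Q) hz
      rw [hp, ite_self, mul_zero]
  rw [Finset.sum_filter_of_ne]
  · simp_rw [hR, aux_coeff g]
    rw [← Polynomial.finsetSum_coeff, ← Polynomial.finsetSum_coeff]
    congr 1
    rw [← aux_part (Finset.Icc 1 j) (fun Q => Polynomial.C (g 0 Q))
      (fun Q => ∑ k : Fin (i + 1),
        Polynomial.C (G k Q) * (Polynomial.X : Polynomial A) ^ (k : ℕ))
      (fun Q hQ => by simp only [hg 0 Q (by omega), map_zero])]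
    refine Finset.sum_congr rfl fun π _ => Finset.prod_congr rfl fun Q _ => ?_
    rw [Fin.sum_univ_succ, Fin.sum_univ_succ]
    simp [hG, add_comm]
  · intro P _ hne
    by_contra hlt
    apply hne
    refine Finset.sum_eq_zero fun π _ => Finset.sum_eq_zero fun c _ => ?_
    split_ifs with h
    · obtain ⟨h1, h2⟩ := h
      by_cases hex : ∃ Q : {Q // Q ∈ π.parts}, (c Q : ℕ) + 2 ≤ Q.1.card
      · obtain ⟨Q, hQ⟩ := hex
        rw [Finset.prod_eq_zero (Finset.mem_univ Q) (hg _ _ hQ), mul_zero]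
      · exfalso
        push Not at hex
        apply hlt
        rw [← π.sum_card_parts, ← Finset.sum_coe_sort, ← h2, Finset.mul_sum]
        refine Finset.sum_le_sum fun Q _ => ?_
        have := h1 Q
        have := hex Q
        omega
    · rfl
end

section
/- Let β > 0. For all integers j ≥ 1, ℓ ≥ 1, all b ∈ ℕ, and all t ≥ 0, the iterated exponential integral satisfies I^ℓ_j(t) ≤ ((j+b)/(j+ℓ))^b · e^{βbt}. -/
open MeasureTheory

/-- The nested integral `∫₀^t ∫₀^{s_ℓ} ⋯ ∫₀^{s_2} e^{-β(s_2+⋯+s_ℓ)} e^{a s_1} ds_1 ⋯ ds_ℓ`,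
defined recursively in the number `ℓ` of integrations. -/
noncomputable def nestInt (β a : ℝ) : ℕ → ℝ → ℝ
  | 0, _ => 1
  | 1, t => ∫ s in (0:ℝ)..t, Real.exp (a * s)
  | (n + 2), t => ∫ s in (0:ℝ)..t, Real.exp (-β * s) * nestInt β a (n + 1) s

/-- The iterated exponential integral
`I^ℓ_j(t) = β^ℓ ((j+ℓ-1)!/(j-1)!) e^{-βjt} ∫₀^t ∫₀^{s_ℓ} ⋯ ∫₀^{s_2}
e^{-β(s_2+⋯+s_ℓ)} e^{β(j+ℓ-1)s_1} ds_1 ⋯ ds_ℓ`, with `I^0_j(t) = 1`. -/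
noncomputable def Iex (β : ℝ) (j ℓ : ℕ) (t : ℝ) : ℝ :=
  if ℓ = 0 then 1
  else β ^ ℓ * ((Nat.factorial (j + ℓ - 1) : ℝ) / (Nat.factorial (j - 1) : ℝ)) *
    Real.exp (-(β * j * t)) * nestInt β (β * ((j : ℝ) + (ℓ : ℝ) - 1)) ℓ t

theorem nestInt_cont (β a : ℝ) (n : ℕ) : Continuous (nestInt β a n) := by
  induction n with
  | zero =>
    have : nestInt β a 0 = fun _ => 1 := by funext t; simp [nestInt]
    rw [this]; exact continuous_const
  | succ n ih =>
    cases n with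
    | zero =>
      have : nestInt β a (0 + 1) = fun t => ∫ s in (0:ℝ)..t, Real.exp (a * s) := by
        funext t; simp only [nestInt, zero_add]
      rw [this]
      exact intervalIntegral.continuous_primitive
        (fun x y => (by fun_prop : Continuous fun s => Real.exp (a * s)).intervalIntegrable x y) 0
    | succ n =>
      have : nestInt β a (n + 1 + 1) =
          fun t => ∫ s in (0:ℝ)..t, Real.exp (-β * s) * nestInt β a (n + 1) s := by
        funext t; simp only [nestInt]
      rw [this]
      exact intervalIntegral.continuous_primitive
        (fun x y => (by fun_prop : Continuous fun s =>
          Real.exp (-β * s) * nestInt β a (n + 1) s).intervalIntegrable x y) 0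

theorem int_exp_le (d t : ℝ) (hd : 0 < d) :
    ∫ s in (0:ℝ)..t, Real.exp (d * s) ≤ Real.exp (d * t) / d := by
  have h : ∀ x ∈ Set.uIcc (0:ℝ) t,
      HasDerivAt (fun s => Real.exp (d * s) / d) (Real.exp (d * x)) x := by
    intro x _
    have h1 := (((hasDerivAt_id x).const_mul d).exp).div_const d
    have e : Real.exp (d * id x) * (d * 1) / d = Real.exp (d * x) := by
      simp only [id]; field_simp
    rw [e] at h1
    exact h1
  rw [intervalIntegral.integral_eq_sub_of_hasDerivAt h
    ((by fun_prop : Continuous fun s => Real.exp (d * s)).intervalIntegrable _ _)]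
  have : 0 < Real.exp (d * 0) / d := by positivity
  linarith

theorem nestInt_le (β a : ℝ) (hβ : 0 < β) (n : ℕ) : ∀ (c : ℕ) (_ : 1 ≤ c)
    (_ : a ≤ β * (c + n)) (t : ℝ) (_ : 0 ≤ t),
    nestInt β a (n + 1) t ≤
      Real.exp (β * c * t) / (β ^ (n + 1) * (c.ascFactorial (n + 1) : ℝ)) := by
  induction n with
  | zero =>
    intro c hc ha t ht
    have hc' : (0:ℝ) < c := by exact_mod_cast hc
    simp only [nestInt, zero_add]
    have h1 : ∫ s in (0:ℝ)..t, Real.exp (a * s) ≤ ∫ s in (0:ℝ)..t, Real.exp ((β * c) * s) := by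
      apply intervalIntegral.integral_mono_on ht
        ((by fun_prop : Continuous fun s => Real.exp (a * s)).intervalIntegrable _ _)
        ((by fun_prop : Continuous fun s => Real.exp ((β * c) * s)).intervalIntegrable _ _)
      intro s hs
      apply Real.exp_le_exp.2
      apply mul_le_mul_of_nonneg_right _ hs.1
      simpa using ha
    have h2 := int_exp_le (β * c) t (by positivity)
    simpa [Nat.ascFactorial] using h1.trans h2
  | succ n ih =>
    intro c hc ha t ht
    have hc' : (0:ℝ) < c := by exact_mod_cast hc
    have ih' := ih (c + 1) (by omega) (by push_cast at ha ⊢; linarith)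
    have hA : (c.ascFactorial (n + 1 + 1) : ℝ) = c * ((c + 1).ascFactorial (n + 1) : ℝ) := by
      rw [Nat.ascFactorial_succ, ← Nat.succ_ascFactorial]; push_cast; rfl
    have hp : (0:ℝ) < ((c + 1).ascFactorial (n + 1) : ℝ) := by
      exact_mod_cast Nat.ascFactorial_pos _ _
    set A : ℝ := ((c + 1).ascFactorial (n + 1) : ℝ) with hAd
    have e0 : nestInt β a (n + 1 + 1) t =
        ∫ s in (0:ℝ)..t, Real.exp (-β * s) * nestInt β a (n + 1) s := by
      simp only [nestInt]
    rw [e0, hA]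
    have hcont := nestInt_cont β a (n + 1)
    have h1 : ∫ s in (0:ℝ)..t, Real.exp (-β * s) * nestInt β a (n + 1) s ≤
        ∫ s in (0:ℝ)..t, (1 / (β ^ (n + 1) * A)) * Real.exp ((β * c) * s) := by
      apply intervalIntegral.integral_mono_on ht
        ((by fun_prop : Continuous fun s =>
          Real.exp (-β * s) * nestInt β a (n + 1) s).intervalIntegrable _ _)
        ((by fun_prop : Continuous fun s =>
          (1 / (β ^ (n + 1) * A)) * Real.exp ((β * c) * s)).intervalIntegrable _ _)
      intro s hs
      refine (mul_le_mul_of_nonneg_left (ih' s hs.1) (Real.exp_pos _).le).trans (le_of_eq ?_)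
      have : Real.exp (β * c * s) = Real.exp (-β * s) * Real.exp (β * ((c + 1 : ℕ) : ℝ) * s) := by
        rw [← Real.exp_add]; congr 1; push_cast; ring
      rw [this]; ring
    refine h1.trans ?_
    rw [intervalIntegral.integral_const_mul]
    refine (mul_le_mul_of_nonneg_left (int_exp_le (β * c) t (by positivity))
      (by positivity)).trans (le_of_eq ?_)
    field_simp
    ring

/-- Polynomial decay estimate: `I^ℓ_j(t) ≤ ((j+b)/(j+ℓ))^b e^{βbt}`. -/
theorem Iex_poly_bound (β : ℝ) (hβ : 0 < β) (j ℓ : ℕ) (hj : 1 ≤ j) (hℓ : 1 ≤ ℓ)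
    (b : ℕ) (t : ℝ) (ht : 0 ≤ t) :
    Iex β j ℓ t ≤ (((j : ℝ) + b) / ((j : ℝ) + ℓ)) ^ b * Real.exp (β * b * t) := by
  obtain ⟨k, rfl⟩ : ∃ k, j = k + 1 := ⟨j - 1, by omega⟩
  obtain ⟨n, rfl⟩ : ∃ n, ℓ = n + 1 := ⟨ℓ - 1, by omega⟩
  have hN := nestInt_le β (β * (((k + 1 : ℕ) : ℝ) + ((n + 1 : ℕ) : ℝ) - 1)) hβ n (k + 1 + b)
    (by omega) (by
      apply mul_le_mul_of_nonneg_left _ hβ.le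
      have : (0:ℝ) ≤ b := by positivity
      push_cast; linarith) t ht
  have hF : (Nat.factorial (k + 1 + (n + 1) - 1) : ℝ) / (Nat.factorial (k + 1 - 1) : ℝ)
      = ((k + 1).ascFactorial (n + 1) : ℝ) := by
    have := Nat.factorial_mul_ascFactorial k (n + 1)
    have e : k + 1 + (n + 1) - 1 = k + (n + 1) := by omega
    rw [e, ← this, Nat.add_sub_cancel]
    have : (Nat.factorial k : ℝ) ≠ 0 := by exact_mod_cast Nat.factorial_ne_zero k
    push_cast
    field_simp
  rw [Iex, if_neg (by omega), hF]
  have h1 := Nat.ascFactorial_mul_ascFactorial (k + 1) (n + 1) b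
  have h2 := Nat.ascFactorial_mul_ascFactorial (k + 1) b (n + 1)
  rw [add_comm b (n + 1), ← h1] at h2
  have h3 : (k + 1).ascFactorial b ≤ (k + 1 + b) ^ b := by
    refine (Nat.ascFactorial_le_pow_add k b).trans (Nat.pow_le_pow_left (by omega) _)
  have h4 : (k + 1 + (n + 1)) ^ b ≤ (k + 1 + (n + 1)).ascFactorial b :=
    Nat.pow_succ_le_ascFactorial _ _
  have hq : 0 < (k + 1 + b).ascFactorial (n + 1) := by
    rw [add_right_comm]; exact Nat.ascFactorial_pos (k + b) _
  set P := (k + 1).ascFactorial (n + 1)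
  set Q := (k + 1 + b).ascFactorial (n + 1)
  have h5 : P * (k + 1 + (n + 1)) ^ b ≤ (k + 1 + b) ^ b * Q :=
    (Nat.mul_le_mul_left _ h4).trans (h2.symm.le.trans (Nat.mul_le_mul_right _ h3))
  have h5' : (P : ℝ) * (((k + 1 : ℕ) : ℝ) + ((n + 1 : ℕ) : ℝ)) ^ b
      ≤ (((k + 1 : ℕ) : ℝ) + b) ^ b * Q := by exact_mod_cast h5
  have hq' : (0:ℝ) < Q := by exact_mod_cast hq
  refine (mul_le_mul_of_nonneg_left hN (by positivity)).trans ?_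
  have hE : Real.exp (β * ((k + 1 + b : ℕ) : ℝ) * t) =
      Real.exp (β * ((k + 1 : ℕ) : ℝ) * t) * Real.exp (β * b * t) := by
    rw [← Real.exp_add]; congr 1; push_cast; ring
  have hL : β ^ (n + 1) * (P : ℝ) * Real.exp (-(β * ((k + 1 : ℕ) : ℝ) * t)) *
      (Real.exp (β * ((k + 1 + b : ℕ) : ℝ) * t) / (β ^ (n + 1) * (Q : ℝ))) =
      (P / Q : ℝ) * Real.exp (β * b * t) := by
    rw [hE, Real.exp_neg]
    have := Real.exp_ne_zero (β * ((k + 1 : ℕ) : ℝ) * t)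
    field_simp
  rw [hL]
  apply mul_le_mul_of_nonneg_right _ (Real.exp_pos _).le
  rw [div_pow, div_le_div_iff₀ hq' (by positivity)]
  exact h5'
end

section
/- Let β > 0. For all integers j ≥ 1, ℓ ≥ 1 and all t ≥ 0, if j ≤ (1/3)·e^{-2βt-1}·ℓ, then the iterated exponential integral satisfies I^ℓ_j(t) ≤ exp(-(1/3)·e^{-2βt-1}·ℓ). -/
open MeasureTheory

noncomputable def auxG (β a : ℝ) : ℕ → ℝ → ℝ
  | 0, t => Real.exp ((a + β) * t)
  | (n + 1), t => ∫ s in (0:ℝ)..t, Real.exp (-β * s) * auxG β a n s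

theorem nestInt_eq_auxG (β a : ℝ) (n : ℕ) : nestInt β a (n + 1) = auxG β a (n + 1) := by
  induction n with
  | zero =>
    funext t
    simp only [nestInt, auxG]
    congr 1
    funext s
    rw [← Real.exp_add]
    congr 1
    ring
  | succ n ih =>
    funext t
    rw [nestInt, auxG, ih]

theorem auxG_continuous (β a : ℝ) (n : ℕ) : Continuous (auxG β a n) := by
  induction n with
  | zero =>
    show Continuous fun t => Real.exp ((a + β) * t)
    fun_prop
  | succ n ih =>
    show Continuous fun t => ∫ s in (0:ℝ)..t, Real.exp (-β * s) * auxG β a n s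
    have hc : Continuous fun s => Real.exp (-β * s) * auxG β a n s := by fun_prop
    exact intervalIntegral.continuous_primitive (fun x y => hc.intervalIntegrable x y) 0

theorem auxG_bound (β z t : ℝ) (hβ : 0 < β) (hz : 1 ≤ z) (N : ℕ)
    (hD : 0 < 1 - z + z * Real.exp (-β * t)) (n : ℕ) :
    ∀ k : ℕ, k + n + 1 = N → ∀ s : ℝ, 0 ≤ s → s ≤ t →
      z ^ n * β ^ n * ((k + n).factorial : ℝ) * auxG β (β * ((N : ℝ) - 1)) n s ≤
        (k.factorial : ℝ) * ((1 - z + z * Real.exp (-β * s))⁻¹) ^ (k + 1) := by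
  have hDs : ∀ s : ℝ, s ≤ t → 0 < 1 - z + z * Real.exp (-β * s) := by
    intro s hs
    have : Real.exp (-β * t) ≤ Real.exp (-β * s) := by
      apply Real.exp_le_exp.2; nlinarith
    nlinarith
  induction n with
  | zero =>
    intro k hk s hs hst
    subst hk
    simp only [pow_zero, one_mul, add_zero, auxG]
    apply mul_le_mul_of_nonneg_left _ (by positivity)
    have h1 : Real.exp ((β * (((k + 1 : ℕ) : ℝ) - 1) + β) * s) = (Real.exp (β * s)) ^ (k + 1) := by
      rw [← Real.exp_nat_mul]; congr 1; push_cast; ring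
    rw [h1]
    apply pow_le_pow_left₀ (Real.exp_pos _).le
    rw [le_inv_comm₀ (Real.exp_pos _) (hDs s hst), ← Real.exp_neg, ← neg_mul]
    have : Real.exp (-β * s) ≤ 1 := Real.exp_le_one_iff.2 (by nlinarith)
    nlinarith
  | succ n ih =>
    intro k hk s hs hst
    have ih' := ih (k + 1) (by omega)
    have hder : ∀ x ∈ Set.uIcc 0 s, HasDerivAt
        (fun x => (k.factorial : ℝ) * ((1 - z + z * Real.exp (-β * x))⁻¹) ^ (k + 1))
        (z * β * Real.exp (-β * x) *
          (((k + 1).factorial : ℝ) * ((1 - z + z * Real.exp (-β * x))⁻¹) ^ (k + 2))) x := by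
      intro x hx
      rw [Set.uIcc_of_le hs] at hx
      have hne := (hDs x (hx.2.trans hst)).ne'
      have h0 : HasDerivAt (fun x : ℝ => -β * x) (-β) x := by
        simpa using (hasDerivAt_id x).const_mul (-β)
      have h1 := (((h0.exp.const_mul z).const_add (1 - z)).inv hne).pow (k + 1)
      have h2 := h1.const_mul (k.factorial : ℝ)
      refine h2.congr_deriv ?_
      rw [Nat.factorial_succ]
      push_cast
      simp only [Pi.inv_apply, div_eq_mul_inv, ← inv_pow]
      generalize (1 - z + z * Real.exp (-β * x))⁻¹ = y
      ring
    have hcont : ContinuousOn (fun x => z * β * Real.exp (-β * x) *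
          (((k + 1).factorial : ℝ) * ((1 - z + z * Real.exp (-β * x))⁻¹) ^ (k + 2)))
          (Set.uIcc 0 s) := by
      have : ContinuousOn (fun x => (1 - z + z * Real.exp (-β * x))⁻¹) (Set.uIcc 0 s) := by
        apply ContinuousOn.inv₀ (by fun_prop)
        intro x hx
        rw [Set.uIcc_of_le hs] at hx
        exact (hDs x (hx.2.trans hst)).ne'
      fun_prop
    have hint := intervalIntegral.integral_eq_sub_of_hasDerivAt hder hcont.intervalIntegrable
    have hGc := auxG_continuous β (β * ((N : ℝ) - 1)) n
    have hle : ∫ x in (0:ℝ)..s, (z ^ (n + 1) * β ^ (n + 1) * ((k + (n + 1)).factorial : ℝ)) *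
        (Real.exp (-β * x) * auxG β (β * ((N : ℝ) - 1)) n x) ≤
        ∫ x in (0:ℝ)..s, z * β * Real.exp (-β * x) *
          (((k + 1).factorial : ℝ) * ((1 - z + z * Real.exp (-β * x))⁻¹) ^ (k + 2)) := by
      apply intervalIntegral.integral_mono_on hs _ hcont.intervalIntegrable
      · intro x hx
        have h := ih' x hx.1 (hx.2.trans hst)
        have h3 : 0 ≤ z * β * Real.exp (-β * x) := by positivity
        have h4 := mul_le_mul_of_nonneg_left h h3
        refine le_trans (le_of_eq ?_) h4
        rw [show k + 1 + n = k + (n + 1) by ring]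
        ring
      · apply Continuous.intervalIntegrable
        fun_prop
    rw [intervalIntegral.integral_const_mul, hint] at hle
    simp only [auxG]
    refine hle.trans ?_
    simp

/-- Exponential decay estimate: if `j ≤ (1/3)e^{-2βt-1}ℓ` then
`I^ℓ_j(t) ≤ exp(-(1/3)e^{-2βt-1}ℓ)`. -/
theorem Iex_exp_bound (β : ℝ) (hβ : 0 < β) (j ℓ : ℕ) (hj : 1 ≤ j) (hℓ : 1 ≤ ℓ)
    (t : ℝ) (ht : 0 ≤ t)
    (hjl : (j : ℝ) ≤ (1 / 3) * Real.exp (-(2 * β * t) - 1) * (ℓ : ℝ)) :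
    Iex β j ℓ t ≤ Real.exp (-((1 / 3) * Real.exp (-(2 * β * t) - 1) * (ℓ : ℝ))) := by
  obtain ⟨n, rfl⟩ : ∃ n, ℓ = n + 1 := ⟨ℓ - 1, by omega⟩
  obtain ⟨k, rfl⟩ : ∃ k, j = k + 1 := ⟨j - 1, by omega⟩
  set p := Real.exp (-β * t) with hp
  have hp0 : 0 < p := Real.exp_pos _
  have hp1 : p ≤ 1 := Real.exp_le_one_iff.2 (by nlinarith)
  have hD : p / 2 ≤ 1 - (1 + p / 2) + (1 + p / 2) * p := by nlinarith
  have hD0 : 0 < 1 - (1 + p / 2) + (1 + p / 2) * p := by linarith [half_pos hp0]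
  have hb := auxG_bound β (1 + p / 2) t hβ (by linarith) (k + (n + 1) + 1) hD0 (n + 1) k rfl t ht
    le_rfl
  rw [← hp] at hb
  set c := (1 / 3 : ℝ) * Real.exp (-(2 * β * t) - 1) with hc
  have hcp : c = p ^ 2 * Real.exp (-1) / 3 := by
    rw [hc, hp, ← Real.exp_nat_mul, sub_eq_add_neg, Real.exp_add]
    push_cast
    ring_nf
  have he : Real.exp (-1) ≤ 1 / 2 := by
    rw [Real.exp_neg, inv_le_comm₀ (Real.exp_pos _) (by norm_num)]
    have := Real.add_one_le_exp (1:ℝ)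
    norm_num at this ⊢
    linarith
  have h2c : 2 * c ≤ p / 3 := by
    rw [hcp]
    have : p ^ 2 * Real.exp (-1) ≤ p * (1 / 2) := by
      apply mul_le_mul (by nlinarith) he (Real.exp_pos _).le hp0.le
    linarith
  have hz : Real.exp (p / 3) ≤ 1 + p / 2 := by
    have h1 := Real.add_one_le_exp (-(p / 3))
    have h2 : Real.exp (p / 3) * Real.exp (-(p / 3)) = 1 := by
      rw [← Real.exp_add]; simp
    have h3 : Real.exp (p / 3) * (-(p / 3) + 1) ≤ 1 := by
      exact (mul_le_mul_of_nonneg_left h1 (Real.exp_pos _).le).trans h2.le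
    by_contra hcon
    push Not at hcon
    have h4 : (1 + p / 2) * (-(p / 3) + 1) < Real.exp (p / 3) * (-(p / 3) + 1) :=
      mul_lt_mul_of_pos_right hcon (by linarith)
    nlinarith
  have hZ : Real.exp (p / 3 * ((n + 1 : ℕ) : ℝ)) ≤ (1 + p / 2) ^ (n + 1) := by
    rw [mul_comm, Real.exp_nat_mul]
    exact pow_le_pow_left₀ (Real.exp_pos _).le hz _
  have hF : p * (1 - (1 + p / 2) + (1 + p / 2) * p)⁻¹ ≤ Real.exp 1 := by
    have h1 : p * (1 - (1 + p / 2) + (1 + p / 2) * p)⁻¹ ≤ 2 := by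
      rw [← div_eq_mul_inv, div_le_iff₀ hD0]; linarith
    have := Real.add_one_le_exp (1:ℝ)
    linarith
  have hFk : (p * (1 - (1 + p / 2) + (1 + p / 2) * p)⁻¹) ^ (k + 1) ≤
      Real.exp (((k + 1 : ℕ) : ℝ)) := by
    have := pow_le_pow_left₀ (by positivity) hF (k + 1)
    rwa [← Real.exp_nat_mul, mul_one] at this
  have hE : Real.exp (-(β * ((k + 1 : ℕ) : ℝ) * t)) = p ^ (k + 1) := by
    rw [hp, ← Real.exp_nat_mul]; congr 1; ring
  have hZ0 : 0 < (1 + p / 2) ^ (n + 1) := by positivity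
  have hkf : (0 : ℝ) < (k.factorial : ℝ) := by positivity
  have hmul : (1 + p / 2) ^ (n + 1) * Iex β (k + 1) (n + 1) t ≤ Real.exp (((k + 1 : ℕ) : ℝ)) := by
    refine le_trans ?_ hFk
    rw [Iex, if_neg (Nat.succ_ne_zero n), hE, nestInt_eq_auxG,
      show k + 1 + (n + 1) - 1 = k + (n + 1) by omega, Nat.add_sub_cancel,
      show ((k + 1 : ℕ) : ℝ) + ((n + 1 : ℕ) : ℝ) - 1 = ((k + (n + 1) + 1 : ℕ) : ℝ) - 1 by
        push_cast; ring, mul_pow]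
    have h5 := mul_le_mul_of_nonneg_left hb (show 0 ≤ p ^ (k + 1) / (k.factorial : ℝ) by positivity)
    calc _ = _ := by ring
      _ ≤ _ := h5
      _ = _ := by field_simp
  have hfin : Iex β (k + 1) (n + 1) t ≤
      Real.exp (((k + 1 : ℕ) : ℝ)) / (1 + p / 2) ^ (n + 1) := by
    rw [le_div_iff₀ hZ0]; linarith
  refine hfin.trans ?_
  rw [div_le_iff₀ hZ0]
  refine le_trans ?_ (mul_le_mul_of_nonneg_left hZ (Real.exp_pos _).le)
  rw [← Real.exp_add]
  apply Real.exp_le_exp.2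
  have h6 := mul_le_mul_of_nonneg_right h2c (Nat.cast_nonneg (α := ℝ) (n + 1))
  linarith
end

section
/- Let β > 0 and i ∈ ℕ. There exists a constant C, depending only on β and i, such that for all integers j ≥ 1, ℓ ≥ 1 and all t ≥ 0: Σ_{k=0}^{ℓ-1} I^{k+1}_j(t) · (j+k)^{2i+1} ≤ C · e^{Ct} · j^{2(i+1)}. -/
open MeasureTheory

lemma nestInt_continuous (β a : ℝ) : ∀ n, Continuous (nestInt β a n)
  | 0 => by
    have : nestInt β a 0 = fun _ => 1 := by funext t; simp [nestInt]
    rw [this]; exact continuous_const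
  | 1 => by
    have : nestInt β a 1 = fun t => ∫ s in (0:ℝ)..t, Real.exp (a * s) := by
      funext t; simp only [nestInt]
    rw [this]
    exact intervalIntegral.continuous_primitive
      (fun x y => (by fun_prop : Continuous fun s => Real.exp (a * s)).intervalIntegrable x y) 0
  | (n + 2) => by
    have ih := nestInt_continuous β a (n + 1)
    have : nestInt β a (n + 2) =
        fun t => ∫ s in (0:ℝ)..t, Real.exp (-β * s) * nestInt β a (n + 1) s := by
      funext t; simp only [nestInt]
    rw [this]
    exact intervalIntegral.continuous_primitive
      (fun x y => (by fun_prop : Continuous fun s =>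
        Real.exp (-β * s) * nestInt β a (n + 1) s).intervalIntegrable x y) 0

lemma Iex_zero (β : ℝ) (j : ℕ) (t : ℝ) : Iex β j 0 t = 1 := by simp [Iex]

lemma Iex_continuous (β : ℝ) (j l : ℕ) : Continuous (Iex β j l) := by
  rcases Nat.eq_zero_or_pos l with h | h
  · subst h
    have : Iex β j 0 = fun _ => 1 := by funext t; simp [Iex]
    rw [this]; exact continuous_const
  · have : Iex β j l = fun t => β ^ l * ((Nat.factorial (j + l - 1) : ℝ) / (Nat.factorial (j - 1) : ℝ)) *
      Real.exp (-(β * j * t)) * nestInt β (β * ((j : ℝ) + (l : ℝ) - 1)) l t := by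
      funext t; simp [Iex, h.ne']
    rw [this]
    have := nestInt_continuous β (β * ((j : ℝ) + (l : ℝ) - 1)) l
    fun_prop

lemma Iex_succ (β : ℝ) (j l : ℕ) (hj : 1 ≤ j) (t : ℝ) :
    Iex β j (l + 1) t = β * j * Real.exp (-(β * j * t)) *
      ∫ s in (0:ℝ)..t, Real.exp (β * j * s) * Iex β (j + 1) l s := by
  obtain ⟨m, rfl⟩ : ∃ m, j = m + 1 := ⟨j - 1, by omega⟩
  have hm : (Nat.factorial m : ℝ) ≠ 0 := by positivity
  rcases l with _ | l
  · simp only [Iex_zero]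
    simp only [Iex, nestInt]
    have e : m + 1 + (0 + 1) - 1 = m + 1 := by omega
    simp only [e, Nat.add_sub_cancel, Nat.factorial_succ]
    simp
    field_simp
    simp
  · have key : (∫ s in (0:ℝ)..t, Real.exp (β * ((m + 1 : ℕ):ℝ) * s) * Iex β (m + 1 + 1) (l + 1) s)
        = β ^ (l + 1) * ((Nat.factorial (m + 1 + l + 1) : ℝ) / (Nat.factorial (m + 1) : ℝ)) *
        ∫ s in (0:ℝ)..t, Real.exp (-β * s) *
          nestInt β (β * (((m + 1 : ℕ):ℝ) + ((l + 1 + 1 : ℕ):ℝ) - 1)) (l + 1) s := by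
      rw [← intervalIntegral.integral_const_mul]
      refine intervalIntegral.integral_congr fun s _ => ?_
      have e : m + 1 + 1 + (l + 1) - 1 = m + 1 + l + 1 := by omega
      have ea : β * (((m + 1 + 1 : ℕ):ℝ) + ((l + 1 : ℕ):ℝ) - 1)
        = β * (((m + 1 : ℕ):ℝ) + ((l + 1 + 1 : ℕ):ℝ) - 1) := by push_cast; ring
      have ex : Real.exp (-β * s) = Real.exp (β * ((m + 1 : ℕ):ℝ) * s) *
          Real.exp (-(β * ((m + 1 + 1 : ℕ):ℝ) * s)) := by
        rw [← Real.exp_add]; congr 1; push_cast; ring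
      simp only [Iex, e, ea, Nat.add_sub_cancel, ex, Nat.succ_ne_zero, if_false]
      ring
    rw [key]
    have e : m + 1 + (l + 1 + 1) - 1 = m + 1 + l + 1 := by omega
    simp only [Iex, nestInt, e, Nat.add_sub_cancel, Nat.succ_ne_zero, if_false]
    rw [Nat.factorial_succ m]
    push_cast
    field_simp
    ring

lemma Iex_nonneg (β : ℝ) (hβ : 0 < β) (l : ℕ) : ∀ j : ℕ, 1 ≤ j → ∀ t : ℝ, 0 ≤ t →
    0 ≤ Iex β j l t := by
  induction l with
  | zero => intro j _ t _; simp [Iex_zero]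
  | succ l ih =>
    intro j hj t ht
    rw [Iex_succ β j l hj t]
    have : 0 ≤ ∫ s in (0:ℝ)..t, Real.exp (β * j * s) * Iex β (j + 1) l s :=
      intervalIntegral.integral_nonneg ht fun s hs =>
        mul_nonneg (Real.exp_pos _).le (ih (j + 1) (by omega) s hs.1)
    positivity

lemma integral_exp_aux (c t : ℝ) (hc : c ≠ 0) :
    ∫ s in (0:ℝ)..t, Real.exp (c * s) = (Real.exp (c * t) - 1) / c := by
  rw [intervalIntegral.integral_comp_mul_left (fun x => Real.exp x) hc]
  simp [integral_exp]
  field_simp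

lemma Iex_key (β : ℝ) (hβ : 0 < β) (n : ℕ) (l : ℕ) : ∀ j : ℕ, 1 ≤ j → ∀ t : ℝ, 0 ≤ t →
    ∑ k ∈ Finset.range l, Iex β j (k + 1) t *
      (((j + k + 1).ascFactorial n : ℝ) - ((j + k).ascFactorial n : ℝ))
      ≤ (Real.exp (n * β * t) - 1) * (j.ascFactorial n : ℝ) := by
  induction l with
  | zero =>
    intro j _ t ht
    have : 1 ≤ Real.exp (n * β * t) := Real.one_le_exp (by positivity)
    simp only [Finset.range_zero, Finset.sum_empty]
    exact mul_nonneg (by linarith) (by positivity)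
  | succ l ih =>
    intro j hj t ht
    have hj0 : (0:ℝ) < j := by exact_mod_cast hj
    set A : ℝ := (j.ascFactorial n : ℝ) with hA
    set B : ℝ := ((j + 1).ascFactorial n : ℝ) with hB
    have hAB : (j:ℝ) * B = (j + n) * A := by
      have := Nat.succ_ascFactorial j n
      rw [hA, hB]; exact_mod_cast this
    have hc : ∀ k, Continuous (Iex β (j + 1) k) := fun k => Iex_continuous β (j + 1) k
    have e1 : ∑ k ∈ Finset.range (l + 1), Iex β j (k + 1) t *
      (((j + k + 1).ascFactorial n : ℝ) - ((j + k).ascFactorial n : ℝ))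
      = β * j * Real.exp (-(β * j * t)) * ∫ s in (0:ℝ)..t, Real.exp (β * j * s) *
        ∑ k ∈ Finset.range (l + 1), Iex β (j + 1) k s *
          (((j + k + 1).ascFactorial n : ℝ) - ((j + k).ascFactorial n : ℝ)) := by
      simp_rw [Finset.mul_sum]
      rw [intervalIntegral.integral_finsetSum]
      · rw [Finset.mul_sum]
        refine Finset.sum_congr rfl fun k _ => ?_
        rw [Iex_succ β j k hj t, mul_assoc, ← intervalIntegral.integral_mul_const]
        simp only [mul_assoc]
      · intro k _
        have := hc k
        exact (by fun_prop : Continuous _).intervalIntegrable _ _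
    rw [e1]
    have e2 : (∫ s in (0:ℝ)..t, Real.exp (β * j * s) *
        ∑ k ∈ Finset.range (l + 1), Iex β (j + 1) k s *
          (((j + k + 1).ascFactorial n : ℝ) - ((j + k).ascFactorial n : ℝ)))
        ≤ ∫ s in (0:ℝ)..t, (B * Real.exp ((β * (j + n)) * s) - A * Real.exp ((β * j) * s)) := by
      apply intervalIntegral.integral_mono_on ht
      · exact (by fun_prop : Continuous _).intervalIntegrable _ _
      · exact (by fun_prop : Continuous _).intervalIntegrable _ _
      · intro s hs
        have h := ih (j + 1) (by omega) s hs.1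
        rw [Finset.sum_range_succ']
        have h' : ∑ k ∈ Finset.range l, Iex β (j + 1) (k + 1) s *
          (((j + (k + 1) + 1).ascFactorial n : ℝ) - ((j + (k + 1)).ascFactorial n : ℝ))
          ≤ (Real.exp (n * β * s) - 1) * B := by
          refine le_trans (le_of_eq ?_) h
          refine Finset.sum_congr rfl fun k _ => ?_
          have : j + (k + 1) = j + 1 + k := by ring
          rw [this]
        have ex : Real.exp (β * (j + n) * s) = Real.exp (β * j * s) * Real.exp (n * β * s) := by
          rw [← Real.exp_add]; congr 1; ring
        rw [Iex_zero, ex]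
        simp only [add_zero]
        have := mul_le_mul_of_nonneg_left h' (Real.exp_pos (β * j * s)).le
        rw [← hA, ← hB]
        linarith
    refine le_trans (mul_le_mul_of_nonneg_left e2 (by positivity)) (le_of_eq ?_)
    rw [intervalIntegral.integral_sub
      ((by fun_prop : Continuous _).intervalIntegrable _ _)
      ((by fun_prop : Continuous _).intervalIntegrable _ _),
      intervalIntegral.integral_const_mul, intervalIntegral.integral_const_mul,
      integral_exp_aux _ _ (by positivity), integral_exp_aux _ _ (by positivity)]
    have hB' : B = (j + n) * A / j := by field_simp; linarith
    have ex : Real.exp (β * (j + n) * t) = Real.exp (β * j * t) * Real.exp (n * β * t) := by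
      rw [← Real.exp_add]; congr 1; ring
    rw [hB', ex, Real.exp_neg]
    have := Real.exp_pos (β * j * t)
    have : (j:ℝ) + n ≠ 0 := by positivity
    field_simp
    ring

lemma ascFactorial_le_aux (j n : ℕ) (hj : 1 ≤ j) :
    j.ascFactorial n ≤ n.factorial * j ^ n := by
  induction n with
  | zero => simp
  | succ n ih =>
    rw [Nat.ascFactorial_succ, Nat.factorial_succ, pow_succ]
    have : j + n ≤ (n + 1) * j := by nlinarith
    calc (j + n) * j.ascFactorial n ≤ ((n + 1) * j) * (n.factorial * j ^ n) :=
          Nat.mul_le_mul this ih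
      _ = _ := by ring

lemma weight_aux (m n : ℕ) (hm : 1 ≤ m) :
    (m:ℝ) ^ n ≤ ((m + 1).ascFactorial (n + 1) : ℝ) - (m.ascFactorial (n + 1) : ℝ) := by
  have hm0 : (0:ℝ) < m := by exact_mod_cast hm
  have h1 : (m:ℝ) * ((m + 1).ascFactorial (n + 1) : ℝ)
      = (m + (n + 1)) * (m.ascFactorial (n + 1) : ℝ) := by
    have := Nat.succ_ascFactorial m (n + 1)
    exact_mod_cast this
  have h2 : (m:ℝ) ^ (n + 1) ≤ (m.ascFactorial (n + 1) : ℝ) := by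
    exact_mod_cast Nat.pow_succ_le_ascFactorial m (n + 1)
  have h3 : (0:ℝ) ≤ n * (m.ascFactorial (n + 1) : ℝ) := by positivity
  refine le_of_mul_le_mul_left ?_ hm0
  rw [pow_succ] at h2
  nlinarith

/-- There is a constant `C`, depending only on `β` and `i`, such that for all `j, ℓ ≥ 1`
and `t ≥ 0`: `Σ_{k=0}^{ℓ-1} I^{k+1}_j(t) (j+k)^{2i+1} ≤ C e^{Ct} j^{2(i+1)}`. -/
theorem Iex_weighted_sum_bound (β : ℝ) (hβ : 0 < β) (i : ℕ) :
    ∃ C : ℝ, ∀ j ℓ : ℕ, 1 ≤ j → 1 ≤ ℓ → ∀ t : ℝ, 0 ≤ t →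
      ∑ k ∈ Finset.range ℓ, Iex β j (k + 1) t * ((j : ℝ) + (k : ℝ)) ^ (2 * i + 1)
        ≤ C * Real.exp (C * t) * (j : ℝ) ^ (2 * (i + 1)) := by
  set n := 2 * i + 1 with hn
  refine ⟨(n + 1).factorial + (n + 1) * β, fun j l hj _ t ht => ?_⟩
  have hk := Iex_key β hβ (n + 1) l j hj t ht
  have h1 : ∑ k ∈ Finset.range l, Iex β j (k + 1) t * ((j : ℝ) + (k : ℝ)) ^ n ≤
      ∑ k ∈ Finset.range l, Iex β j (k + 1) t *
      (((j + k + 1).ascFactorial (n + 1) : ℝ) - ((j + k).ascFactorial (n + 1) : ℝ)) := by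
    refine Finset.sum_le_sum fun k _ => ?_
    have := weight_aux (j + k) n (by omega)
    push_cast at this
    exact mul_le_mul_of_nonneg_left this (Iex_nonneg β hβ (k + 1) j hj t ht)
  have h2 : (j.ascFactorial (n + 1) : ℝ) ≤ (n + 1).factorial * (j:ℝ) ^ (n + 1) := by
    exact_mod_cast ascFactorial_le_aux j (n + 1) hj
  have e : 2 * (i + 1) = n + 1 := by omega
  rw [e]
  refine h1.trans (hk.trans ?_)
  have hf : (0:ℝ) < (n + 1).factorial := by positivity
  have h3 : Real.exp (((n + 1 : ℕ):ℝ) * β * t) - 1 ≤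
      Real.exp (((n + 1).factorial + (n + 1) * β) * t) := by
    have : Real.exp (((n + 1 : ℕ):ℝ) * β * t) ≤
      Real.exp (((n + 1).factorial + (n + 1) * β) * t) := by
      apply Real.exp_le_exp.mpr
      push_cast
      nlinarith [mul_nonneg hf.le ht]
    linarith
  calc _ ≤ Real.exp (((n + 1).factorial + (n + 1) * β) * t) *
        ((n + 1).factorial * (j:ℝ) ^ (n + 1)) :=
        mul_le_mul h3 h2 (by positivity) (Real.exp_pos _).le
    _ = (n + 1).factorial * Real.exp (((n + 1).factorial + (n + 1) * β) * t) * (j:ℝ) ^ (n + 1) := by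
        ring
    _ ≤ _ := by
        gcongr
        have : 0 ≤ ((n:ℝ) + 1) * β := by positivity
        linarith
end

section
/- Let j ≥ 1 be an integer, let σ be a set partition of [j] = {1,…,j}, and let k, ℓ ∈ [j]. Define a^σ_{k,ℓ} := Σ (-1)^(|π|-1)·(|π|-1)!, where the sum is over all coarsenings π of σ such that k and ℓ lie in the same block of π. Let Q be the block of σ containing k and R the block of σ containing ℓ. Then: a^σ_{k,ℓ} = 1 if |σ| = 1; if |σ| = 2 then a^σ_{k,ℓ} = 1 when Q ≠ R and a^σ_{k,ℓ} = 0 when Q = R; and a^σ_{k,ℓ} = 0 whenever |σ| ≥ 3. -/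
open scoped Classical

section Helpers

noncomputable instance fintypeSetoidAux (A : Type) [Finite A] : Fintype (Setoid A) :=
  have : Finite (Setoid A) :=
    Finite.of_injective (fun r : Setoid A => (fun a b => r a b : A → A → Prop))
      (fun r s h => Setoid.ext fun a b => by
        have := congrFun (congrFun h a) b
        simpa using this)
  Fintype.ofFinite _

/-- Functions are the same as a kernel plus an injection of the quotient. -/
noncomputable def funEquivAux (A B : Type) :
    (A → B) ≃ Σ r : Setoid A, (Quotient r ↪ B) where
  toFun f := ⟨Setoid.ker f, ⟨Setoid.kerLift f, Setoid.kerLift_injective f⟩⟩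
  invFun p := fun a => p.2 (Quotient.mk p.1 a)
  left_inv f := rfl
  right_inv := by
    rintro ⟨r, e⟩
    have h : Setoid.ker (fun a => e (Quotient.mk r a)) = r := by
      ext a b
      rw [Setoid.ker_def, e.injective.eq_iff]
      exact Quotient.eq
    refine Sigma.ext h ?_
    have key : ∀ (s : Setoid A) (hs : s = r) (e' : Quotient s ↪ B),
        (∀ a, e' (Quotient.mk s a) = e (Quotient.mk r a)) → e' ≍ e := by
      rintro s rfl e' he
      apply heq_of_eq
      ext q
      induction q using Quotient.inductionOn with
      | h a => exact he a
    exact key _ h _ (fun a => rfl)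

theorem card_fun_aux (A : Type) [Finite A] (x : ℕ) :
    x ^ Nat.card A = ∑ r : Setoid A, x.descFactorial (Nat.card (Quotient r)) := by
  have := Fintype.ofFinite A
  have h := Nat.card_congr (funEquivAux A (Fin x))
  rw [Nat.card_sigma] at h
  simp only [Nat.card_eq_fintype_card, Fintype.card_embedding_eq, Fintype.card_fin,
    Fintype.card_fun] at h
  simp only [Nat.card_eq_fintype_card]
  exact h

open Polynomial in
theorem coeff_one_aux (m : ℕ) (hm : m ≠ 0) :
    (descPochhammer ℤ m).coeff 1 = (-1 : ℤ) ^ (m - 1) * (Nat.factorial (m - 1) : ℤ) := by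
  obtain ⟨n, rfl⟩ := Nat.exists_eq_succ_of_ne_zero hm
  have h : ∀ n : ℕ, (descPochhammer ℤ n).eval (-1) = (-1 : ℤ) ^ n * (Nat.factorial n : ℤ) := by
    intro n
    induction n with
    | zero => simp
    | succ n ih =>
      rw [descPochhammer_succ_eval, ih, Nat.factorial_succ]
      push_cast
      ring
  rw [Nat.succ_eq_add_one, descPochhammer_succ_left, Nat.add_sub_cancel,
    show (1 : ℕ) = 0 + 1 from rfl, coeff_X_mul, coeff_zero_eq_eval_zero, eval_comp]
  simpa using h n

open Polynomial in
theorem sum_setoid_aux (A : Type) [Finite A] [Nonempty A] :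
    ∑ r : Setoid A, ((-1 : ℤ) ^ (Nat.card (Quotient r) - 1) *
      (Nat.factorial (Nat.card (Quotient r) - 1) : ℤ)) = if Nat.card A = 1 then 1 else 0 := by
  have hp : (X : ℤ[X]) ^ Nat.card A = ∑ r : Setoid A, descPochhammer ℤ (Nat.card (Quotient r)) := by
    apply Polynomial.eq_of_infinite_eval_eq
    apply Set.Infinite.mono (s := Set.range (fun n : ℕ => (n : ℤ)))
    · rintro _ ⟨n, rfl⟩
      have := card_fun_aux A n
      simp only [Set.mem_ofPred_eq, eval_pow, eval_X, eval_finsetSum,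
        descPochhammer_eval_eq_descFactorial]
      exact_mod_cast this
    · exact Set.infinite_range_of_injective Nat.cast_injective
  have h1 := congrArg (fun p => p.coeff 1) hp
  simp only [coeff_X_pow, finsetSum_coeff] at h1
  rw [if_congr (eq_comm (a := Nat.card A)) rfl rfl, h1]
  refine Finset.sum_congr rfl fun r _ => (coeff_one_aux _ ?_).symm
  have : Nonempty (Quotient r) := ⟨Quotient.mk r (Classical.arbitrary A)⟩
  exact Nat.card_pos.ne'

theorem sum_ge_aux (A : Type) [Finite A] [Nonempty A] (s : Setoid A) :
    (∑ r : Setoid A, if s ≤ r then ((-1 : ℤ) ^ (Nat.card (Quotient r) - 1) *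
      (Nat.factorial (Nat.card (Quotient r) - 1) : ℤ)) else 0) =
      if Nat.card (Quotient s) = 1 then 1 else 0 := by
  have : Nonempty (Quotient s) := ⟨Quotient.mk s (Classical.arbitrary A)⟩
  rw [← sum_setoid_aux (Quotient s), ← Finset.sum_filter]
  rw [Finset.sum_subtype (p := fun r => s ≤ r) _ (by simp)]
  refine Fintype.sum_equiv (Setoid.correspondence s).toEquiv _ _ ?_
  rintro ⟨r, hr⟩
  have hc : Nat.card (Quotient r) =
      Nat.card (Quotient ((Setoid.correspondence s).toEquiv ⟨r, hr⟩)) :=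
    (Nat.card_congr (Setoid.quotientQuotientEquivQuotient s r hr)).symm.trans
      (Nat.card_congr (Quotient.congrRight (by
        intro a b
        induction a using Quotient.inductionOn with
        | h a =>
          induction b using Quotient.inductionOn with
          | h b =>
            change Quotient.mk r a = Quotient.mk r b ↔ r a b
            exact Quotient.eq (r := r))))
  rw [← hc]

def kerPart {s : Finset ℕ} (π : Finpartition s) : Setoid s := Setoid.ker fun x : s => π.part x

theorem kerPart_bij (s : Finset ℕ) :
    Function.Bijective (kerPart : Finpartition s → Setoid s) := by
  constructor
  · intro π π' h
    have hp : ∀ a ∈ s, π.part a = π'.part a := by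
      intro a ha
      ext b
      by_cases hb : b ∈ s
      · rw [π.mem_part_iff_part_eq_part hb ha, π'.mem_part_iff_part_eq_part hb ha]
        have : kerPart π ⟨b, hb⟩ ⟨a, ha⟩ ↔ kerPart π' ⟨b, hb⟩ ⟨a, ha⟩ := by rw [h]
        exact this
      · exact ⟨fun h => absurd (π.part_subset a h) hb, fun h => absurd (π'.part_subset a h) hb⟩
    ext P
    constructor
    · intro hP
      obtain ⟨a, ha, rfl⟩ := π.part_surjOn hP
      rw [hp a ha]
      exact π'.part_mem.2 ha
    · intro hP
      obtain ⟨a, ha, rfl⟩ := π'.part_surjOn hP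
      rw [← hp a ha]
      exact π.part_mem.2 ha
  · intro r
    let f : ℕ → Option (Quotient r) := fun a =>
      if h : a ∈ s then some (Quotient.mk r ⟨a, h⟩) else none
    refine ⟨Finpartition.ofSetSetoid (Setoid.ker f) s, ?_⟩
    ext ⟨a, ha⟩ ⟨b, hb⟩
    change Finpartition.part _ a = Finpartition.part _ b ↔ _
    rw [← Finpartition.mem_part_iff_part_eq_part _ ha hb,
      Finpartition.mem_part_ofSetSetoid_iff_rel, Setoid.ker_def]
    simp only [f, ha, hb, dif_pos, true_and, Option.some.injEq]
    rw [Quotient.eq]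
    exact r.comm'

theorem card_kerPart {s : Finset ℕ} (π : Finpartition s) :
    Nat.card (Quotient (kerPart π)) = π.parts.card := by
  have e := Nat.card_congr (Setoid.quotientKerEquivRange (fun x : s => π.part x))
  refine e.trans ?_
  have : Set.range (fun x : s => π.part x) = (π.parts : Set (Finset ℕ)) := by
    ext P
    constructor
    · rintro ⟨a, rfl⟩
      exact π.part_mem.2 a.2
    · intro hP
      obtain ⟨a, ha, rfl⟩ := π.part_surjOn hP
      exact ⟨⟨a, ha⟩, rfl⟩
  rw [this]
  simp

theorem le_iff_kerPart {s : Finset ℕ} (σ π : Finpartition s) :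
    σ ≤ π ↔ kerPart σ ≤ kerPart π := by
  constructor
  · rintro h ⟨a, ha⟩ ⟨b, hb⟩ hab
    change σ.part a = σ.part b at hab
    change π.part a = π.part b
    obtain ⟨c, hc, hsub⟩ := h (σ.part_mem.2 ha)
    rw [π.part_eq_of_mem hc (hsub (σ.mem_part ha)),
      π.part_eq_of_mem hc (hsub (hab ▸ σ.mem_part hb))]
  · intro h P hP
    obtain ⟨a, ha, rfl⟩ := σ.part_surjOn hP
    refine ⟨π.part a, π.part_mem.2 ha, fun b hb => ?_⟩
    have hbs := σ.part_subset a hb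
    rw [π.mem_part_iff_part_eq_part hbs ha]
    rw [σ.mem_part_iff_part_eq_part hbs ha] at hb
    exact h (x := ⟨b, hbs⟩) (y := ⟨a, ha⟩) hb

end Helpers


/-- Computation of the coefficients `a^σ_{k,ℓ}` in the cluster hierarchy:
`a^σ_{k,ℓ}` is the sum of `(-1)^(|π|-1)(|π|-1)!` over all coarsenings `π` of `σ`
in which `k` and `ℓ` lie in the same block.  With `Q` (resp. `R`) the block of `σ`
containing `k` (resp. `ℓ`): `a = 1` if `|σ| = 1`; if `|σ| = 2`, then `a = 1` when
`Q ≠ R` and `a = 0` when `Q = R`; and `a = 0` whenever `|σ| ≥ 3`. -/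
theorem coefficient_a_formula (j : ℕ) (hj : 1 ≤ j) (σ : Finpartition (Finset.Icc 1 j))
    (k l : ℕ) (hk : k ∈ Finset.Icc 1 j) (hl : l ∈ Finset.Icc 1 j)
    (Q R : Finset ℕ) (hQ : Q ∈ σ.parts) (hkQ : k ∈ Q) (hR : R ∈ σ.parts) (hlR : l ∈ R)
    (a : ℤ)
    (ha : a = ∑ π : Finpartition (Finset.Icc 1 j),
      if σ ≤ π ∧ ∃ B ∈ π.parts, k ∈ B ∧ l ∈ B then
        (-1 : ℤ) ^ (π.parts.card - 1) * (Nat.factorial (π.parts.card - 1) : ℤ)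
      else 0) :
    (σ.parts.card = 1 → a = 1) ∧
    (σ.parts.card = 2 → (Q ≠ R → a = 1) ∧ (Q = R → a = 0)) ∧
    (3 ≤ σ.parts.card → a = 0) := by
  let s := Finset.Icc 1 j
  let k' : s := ⟨k, hk⟩
  let l' : s := ⟨l, hl⟩
  have hne : Nonempty s := ⟨k'⟩
  have hQk : σ.part k = Q := σ.part_eq_of_mem hQ hkQ
  have hRl : σ.part l = R := σ.part_eq_of_mem hR hlR
  let g : s → Finset ℕ := fun x => if σ.part x = R then Q else σ.part x
  have hgk : g k' = Q := by
    change (if σ.part k = R then Q else σ.part k) = Q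
    rw [hQk]; split_ifs <;> rfl
  have hgl : g l' = Q := by
    change (if σ.part l = R then Q else σ.part l) = Q
    rw [if_pos hRl]
  have hiff : ∀ π : Finpartition s,
      (σ ≤ π ∧ ∃ B ∈ π.parts, k ∈ B ∧ l ∈ B) ↔ Setoid.ker g ≤ kerPart π := by
    intro π
    rw [← Finpartition.mem_part_iff_exists, π.mem_part_iff_part_eq_part hk hl, le_iff_kerPart]
    constructor
    · rintro ⟨h1, h2⟩ a b hab
      rw [Setoid.ker_def] at hab
      have hA : ∀ c : s, kerPart π c k' ∨ g c = σ.part c := by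
        intro c
        by_cases hc : σ.part c = R
        · left
          have : kerPart π c l' := h1 (show σ.part c = σ.part l by rw [hc, hRl])
          exact (kerPart π).trans' this h2.symm
        · right
          exact if_neg hc
      have hB : ∀ c : s, g c = Q → kerPart π c k' := by
        intro c hc
        rcases hA c with h | h
        · exact h
        · exact h1 (show σ.part c = σ.part k by rw [← h, hc, hQk])
      by_cases haQ : g a = Q
      · exact (kerPart π).trans' (hB a haQ) ((kerPart π).symm' (hB b (hab ▸ haQ)))
      · have hC : ∀ c : s, g c ≠ Q → g c = σ.part c := by
          intro c hc
          by_cases h : σ.part c = R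
          · exact absurd (if_pos h) hc
          · exact if_neg h
        apply h1
        change σ.part a = σ.part b
        rw [← hC a haQ, ← hC b (hab ▸ haQ), hab]
    · intro h
      refine ⟨fun a b hab => h ?_, h (x := k') (y := l') (by rw [Setoid.ker_def, hgk, hgl])⟩
      change σ.part a = σ.part b at hab
      change (if σ.part a = R then Q else σ.part a) = (if σ.part b = R then Q else σ.part b)
      rw [hab]
  have hval : a = if Nat.card (Quotient (Setoid.ker g)) = 1 then 1 else 0 := by
    rw [ha, ← sum_ge_aux s (Setoid.ker g)]
    refine Fintype.sum_equiv (Equiv.ofBijective _ (kerPart_bij s)) _ _ fun π => ?_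
    rw [Equiv.ofBijective_apply, card_kerPart]
    exact if_congr (hiff π) rfl rfl
  have hconst : Nat.card (Quotient (Setoid.ker g)) = 1 ↔ ∀ x, g x = Q := by
    rw [Nat.card_eq_one_iff_unique]
    constructor
    · rintro ⟨h, -⟩ x
      have : Quotient.mk (Setoid.ker g) x = Quotient.mk _ k' := Subsingleton.elim _ _
      rw [← hgk]
      exact Quotient.exact this
    · intro h
      refine ⟨⟨fun p q => ?_⟩, ⟨Quotient.mk _ k'⟩⟩
      induction p using Quotient.inductionOn with
      | h a =>
        induction q using Quotient.inductionOn with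
        | h b =>
          apply Quotient.sound
          change g a = g b
          rw [h, h]
  -- a block different from Q and R gives a non constant g
  have hzero : (∃ P ∈ σ.parts, P ≠ Q ∧ P ≠ R) → a = 0 := by
    rintro ⟨P, hP, hPQ, hPR⟩
    rw [hval, if_neg]
    rw [hconst]
    intro h
    obtain ⟨x, hx, rfl⟩ := σ.part_surjOn hP
    have := h ⟨x, hx⟩
    change (if σ.part x = R then Q else σ.part x) = Q at this
    rw [if_neg hPR] at this
    exact hPQ this
  have hone : (∀ P ∈ σ.parts, P = Q ∨ P = R) → Q ≠ R ∨ σ.parts.card = 1 → a = 1 := by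
    intro h _
    rw [hval, if_pos]
    rw [hconst]
    intro x
    change (if σ.part x = R then Q else σ.part x) = Q
    split_ifs with hx
    · rfl
    · exact (h _ (σ.part_mem.2 x.2)).resolve_right hx
  refine ⟨fun h => ?_, fun h => ⟨fun hQR => ?_, fun hQR => ?_⟩, fun h => ?_⟩
  · refine hone (fun P hP => Or.inl ?_) (Or.inr h)
    exact Finset.card_le_one.1 h.le P hP Q hQ
  · refine hone (fun P hP => ?_) (Or.inl hQR)
    have : ({Q, R} : Finset (Finset ℕ)) = σ.parts := by
      apply Finset.eq_of_subset_of_card_le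
      · intro P hP
        rw [Finset.mem_insert, Finset.mem_singleton] at hP
        rcases hP with rfl | rfl <;> assumption
      · rw [h, Finset.card_pair hQR]
    rw [← this] at hP
    simpa using hP
  · subst hQR
    obtain ⟨P, hP, hPQ⟩ := Finset.exists_mem_ne (by omega : 1 < σ.parts.card) Q
    exact hzero ⟨P, hP, hPQ, hPQ⟩
  · obtain ⟨P, hP, hPn⟩ := Finset.exists_mem_notMem_of_card_lt_card
      (s := ({Q, R} : Finset (Finset ℕ))) (t := σ.parts)
      (lt_of_le_of_lt Finset.card_le_two (by omega))
    rw [Finset.mem_insert, Finset.mem_singleton, not_or] at hPn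
    exact hzero ⟨P, hP, hPn.1, hPn.2⟩
end

section
/- Let N be a nonzero real number, let j ≥ 1 be an integer, let * be an element not in [j] = {1,…,j}, let σ be a set partition of [j] ∪ {*}, and let k ∈ [j]. Define b^σ_k := Σ (-1)^(|π|-1)·(|π|-1)!·(N − |B_π| + 1)/N, where the sum is over all coarsenings π of σ such that k and * lie in the same block of π, and B_π denotes that common block. Let Q be the block of σ containing k and R the block of σ containing *. Then: if |σ| = 1 then b^σ_k = (N−j)/N; if |σ| = 2 then b^σ_k = −(j+1−|Q|)/N when Q = R and b^σ_k = (N−j)/N when Q ≠ R; if |σ| = 3 then b^σ_k = 0 when Q = R and b^σ_k = −(j+1−|Q|−|R|)/N when Q ≠ R; and b^σ_k = 0 whenever |σ| ≥ 4. -/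
open scoped Classical

lemma fp_le_part {s : Finset ℕ} {τ π : Finpartition s} (h : τ ≤ π) {a : ℕ} :
    τ.part a ⊆ π.part a := by
  intro b hb
  obtain ⟨p, hp, hbp, hap⟩ := τ.mem_part_iff_exists.1 hb
  obtain ⟨c, hc, hpc⟩ := h hp
  exact π.mem_part_iff_exists.2 ⟨c, hc, hpc hbp, hpc hap⟩

lemma fp_ext {s : Finset ℕ} {τ π : Finpartition s}
    (h : ∀ a ∈ s, ∀ b ∈ s, (π.part a = π.part b ↔ τ.part a = τ.part b)) : τ = π := by
  have key : ∀ a ∈ s, τ.part a = π.part a := by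
    intro a ha
    ext b
    by_cases hb : b ∈ s
    · rw [τ.mem_part_iff_part_eq_part hb ha, π.mem_part_iff_part_eq_part hb ha]
      exact (h b hb a ha).symm
    · exact ⟨fun h => absurd (τ.part_subset a h) hb, fun h => absurd (π.part_subset a h) hb⟩
  ext p
  constructor
  · intro hp
    obtain ⟨a, ha⟩ := τ.nonempty_of_mem_parts hp
    have has := τ.le hp ha
    rw [← τ.part_eq_of_mem hp ha, key a has]
    exact π.part_mem.2 has
  · intro hp
    obtain ⟨a, ha⟩ := π.nonempty_of_mem_parts hp
    have has := π.le hp ha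
    rw [← π.part_eq_of_mem hp ha, ← key a has]
    exact τ.part_mem.2 has

noncomputable def fpRep {s : Finset ℕ} (τ : Finpartition s) (A : τ.parts) : ℕ :=
  (τ.nonempty_of_mem_parts A.2).choose

lemma fpRep_mem {s : Finset ℕ} (τ : Finpartition s) (A : τ.parts) : fpRep τ A ∈ A.1 :=
  (τ.nonempty_of_mem_parts A.2).choose_spec

lemma fpRep_mem' {s : Finset ℕ} (τ : Finpartition s) (A : τ.parts) : fpRep τ A ∈ s :=
  τ.le A.2 (fpRep_mem τ A)

noncomputable def fpMap {s : Finset ℕ} (τ : Finpartition s) (x : ℕ)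
    (p : Σ π : {π : Finpartition s // τ ≤ π}, (π.1.parts ↪ Fin x)) : τ.parts → Fin x :=
  fun A => p.2 ⟨p.1.1.part (fpRep τ A), p.1.1.part_mem.2 (fpRep_mem' τ A)⟩

lemma fpMap_apply {s : Finset ℕ} (τ : Finpartition s) (x : ℕ)
    (p : Σ π : {π : Finpartition s // τ ≤ π}, (π.1.parts ↪ Fin x)) (a : ℕ) (ha : a ∈ s) :
    fpMap τ x p ⟨τ.part a, τ.part_mem.2 ha⟩ = p.2 ⟨p.1.1.part a, p.1.1.part_mem.2 ha⟩ := by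
  unfold fpMap
  congr 2
  apply p.1.1.part_eq_of_mem (p.1.1.part_mem.2 ha)
  exact fp_le_part p.1.2 (fpRep_mem τ ⟨τ.part a, τ.part_mem.2 ha⟩)

lemma fpMap_bij {s : Finset ℕ} (τ : Finpartition s) (x : ℕ) :
    Function.Bijective (fpMap τ x) := by
  constructor
  · intro p q h
    have h1 : ∀ a (ha : a ∈ s), p.2 ⟨p.1.1.part a, p.1.1.part_mem.2 ha⟩
        = q.2 ⟨q.1.1.part a, q.1.1.part_mem.2 ha⟩ := by
      intro a ha
      rw [← fpMap_apply τ x p a ha, ← fpMap_apply τ x q a ha, h]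
    obtain ⟨⟨π, hπ⟩, e⟩ := p
    obtain ⟨⟨ρ, hρ⟩, f⟩ := q
    simp only at h1
    have : π = ρ := by
      apply fp_ext
      intro a ha b hb
      have e1 : (π.part a = π.part b) ↔ e ⟨π.part a, π.part_mem.2 ha⟩ = e ⟨π.part b, π.part_mem.2 hb⟩ := by
        rw [e.injective.eq_iff, Subtype.mk.injEq]
      have e2 : (ρ.part a = ρ.part b) ↔ f ⟨ρ.part a, ρ.part_mem.2 ha⟩ = f ⟨ρ.part b, ρ.part_mem.2 hb⟩ := by
        rw [f.injective.eq_iff, Subtype.mk.injEq]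
      rw [e1, e2, h1 a ha, h1 b hb]
    subst this
    have : e = f := by
      ext ⟨P, hP⟩
      obtain ⟨a, ha⟩ := π.nonempty_of_mem_parts hP
      have has := π.le hP ha
      have := h1 a has
      obtain rfl := π.part_eq_of_mem hP ha
      rw [this]
    subst this
    rfl
  · intro g
    let g' : ℕ → Option (Fin x) := fun a =>
      if ha : a ∈ s then some (g ⟨τ.part a, τ.part_mem.2 ha⟩) else none
    have hg' : ∀ a (ha : a ∈ s), g' a = some (g ⟨τ.part a, τ.part_mem.2 ha⟩) := by
      intro a ha; simp [g', ha]
    let π : Finpartition s := Finpartition.ofSetSetoid (Setoid.ker g') s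
    have hπ : ∀ a b, b ∈ π.part a ↔ a ∈ s ∧ b ∈ s ∧ g' a = g' b := by
      intro a b
      exact Finpartition.mem_part_ofSetSetoid_iff_rel s
    have hle : τ ≤ π := by
      intro P hP
      obtain ⟨a, ha⟩ := τ.nonempty_of_mem_parts hP
      have has := τ.le hP ha
      refine ⟨π.part a, π.part_mem.2 has, ?_⟩
      intro b hb
      have hbs := τ.le hP hb
      rw [hπ]
      refine ⟨has, hbs, ?_⟩
      rw [hg' _ has, hg' _ hbs]
      simp only [τ.part_eq_of_mem hP ha, τ.part_eq_of_mem hP hb]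
    let e : π.parts → Fin x := fun P => g ⟨τ.part (fpRep π P), τ.part_mem.2 (fpRep_mem' π P)⟩
    have he : Function.Injective e := by
      intro P P' h
      have h2 : g' (fpRep π P) = g' (fpRep π P') := by
        rw [hg' _ (fpRep_mem' π P), hg' _ (fpRep_mem' π P')]
        exact congrArg some h
      have h3 : fpRep π P' ∈ π.part (fpRep π P) :=
        (hπ _ _).2 ⟨fpRep_mem' π P, fpRep_mem' π P', h2⟩
      rw [π.part_eq_of_mem P.2 (fpRep_mem π P)] at h3
      exact Subtype.ext (π.eq_of_mem_parts P.2 P'.2 h3 (fpRep_mem π P'))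
    refine ⟨⟨⟨π, hle⟩, ⟨e, he⟩⟩, ?_⟩
    funext ⟨A, hA⟩
    obtain ⟨a, ha⟩ := τ.nonempty_of_mem_parts hA
    have has := τ.le hA ha
    obtain rfl := τ.part_eq_of_mem hA ha
    rw [fpMap_apply τ x _ a has]
    have h5 := fpRep_mem π ⟨π.part a, π.part_mem.2 has⟩
    have h4 := ((hπ _ _).1 h5).2.2
    rw [hg' _ has, hg' _ (fpRep_mem' π _)] at h4
    exact (Option.some.inj h4).symm

lemma fp_count {s : Finset ℕ} (τ : Finpartition s) (x : ℕ) :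
    ∑ π : Finpartition s, (if τ ≤ π then x.descFactorial π.parts.card else 0)
      = x ^ τ.parts.card := by
  have h := Fintype.card_of_bijective (fpMap_bij τ x)
  rw [Fintype.card_sigma] at h
  simp only [Fintype.card_embedding_eq, Fintype.card_fun, Fintype.card_fin, Fintype.card_coe] at h
  rw [← h, ← Finset.sum_filter]
  exact Finset.sum_subtype _ (by simp) _

lemma descP_coeff (m : ℕ) (hm : 1 ≤ m) :
    (descPochhammer ℝ m).coeff 1 = (-1) ^ (m - 1) * ((m - 1).factorial : ℝ) := by
  obtain ⟨n, rfl⟩ : ∃ n, m = n + 1 := ⟨m - 1, by omega⟩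
  rw [descPochhammer_succ_left, Polynomial.coeff_X_mul, Polynomial.coeff_zero_eq_eval_zero,
    Polynomial.eval_comp]
  simp only [Polynomial.eval_sub, Polynomial.eval_X, Polynomial.eval_one, zero_sub,
    Nat.add_sub_cancel]
  clear hm
  induction n with
  | zero => simp
  | succ n ih =>
    rw [descPochhammer_succ_eval, ih, Nat.factorial_succ, pow_succ]
    push_cast
    ring

noncomputable def fpW {s : Finset ℕ} (π : Finpartition s) : ℝ :=
  (-1 : ℝ) ^ (π.parts.card - 1) * (Nat.factorial (π.parts.card - 1) : ℝ)

lemma fp_sum {s : Finset ℕ} (hs : s.Nonempty) (τ : Finpartition s) :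
    ∑ π : Finpartition s, (if τ ≤ π then fpW π else 0)
      = if τ.parts.card = 1 then 1 else 0 := by
  have hpoly : ∑ π : Finpartition s, (if τ ≤ π then descPochhammer ℝ π.parts.card else 0)
      = Polynomial.X ^ τ.parts.card := by
    apply Polynomial.eq_of_infinite_eval_eq
    apply Set.Infinite.mono _ (Set.infinite_range_of_injective (Nat.cast_injective (R := ℝ)))
    rintro _ ⟨x, rfl⟩
    have := congrArg (Nat.cast (R := ℝ)) (fp_count τ x)
    push_cast at this
    simp only [Set.mem_ofPred_eq, Polynomial.eval_finsetSum, Polynomial.eval_pow,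
      Polynomial.eval_X]
    rw [← this]
    apply Finset.sum_congr rfl
    intro π _
    split_ifs
    · exact descPochhammer_eval_eq_descFactorial ℝ x _
    · simp
  have h := congrArg (fun p => Polynomial.coeff p 1) hpoly
  simp only [Polynomial.finsetSum_coeff, Polynomial.coeff_X_pow] at h
  rw [show (if τ.parts.card = 1 then (1 : ℝ) else 0) = if 1 = τ.parts.card then 1 else 0 by
    simp [eq_comm], ← h]
  apply Finset.sum_congr rfl
  intro π _
  split_ifs
  · rw [descP_coeff]
    · rfl
    · exact Finset.card_pos.2 (π.parts_nonempty hs.ne_empty)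
  · simp

lemma fp_merge {s : Finset ℕ} (τ : Finpartition s) (a b : ℕ) (ha : a ∈ s) (hb : b ∈ s) :
    ∃ τ' : Finpartition s, (∀ π, τ' ≤ π ↔ τ ≤ π ∧ b ∈ π.part a) ∧
      τ'.part a = τ.part a ∪ τ.part b ∧
      τ'.parts.card = if b ∈ τ.part a then τ.parts.card else τ.parts.card - 1 := by
  by_cases hab : b ∈ τ.part a
  · refine ⟨τ, fun π => ⟨fun h => ⟨h, fp_le_part h hab⟩, fun h => h.1⟩, ?_, by simp [hab]⟩
    rw [(τ.mem_part_iff_part_eq_part hb ha).1 hab, Finset.union_self]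
  · have hA := τ.part_mem.2 ha
    have hB := τ.part_mem.2 hb
    have haA := τ.mem_part ha
    have hbB := τ.mem_part hb
    have hne : τ.part b ≠ τ.part a := fun h => hab ((τ.mem_part_iff_part_eq_part hb ha).2 h)
    generalize hAdef : τ.part a = A at *
    generalize hBdef : τ.part b = B at *
    have hU : A ∪ B ∉ (τ.parts.erase A).erase B := by
      intro h
      simp only [Finset.mem_erase] at h
      exact h.2.1 (τ.eq_of_mem_parts h.2.2 hA (Finset.mem_union_left _ haA) haA)
    let τ' : Finpartition s := Finpartition.ofExistsUnique
      (insert (A ∪ B) ((τ.parts.erase A).erase B))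
      (by
        intro p hp
        simp only [Finset.mem_insert, Finset.mem_erase] at hp
        rcases hp with rfl | hp
        · exact Finset.union_subset (τ.le hA) (τ.le hB)
        · exact τ.le hp.2.2)
      (by
        intro c hc
        by_cases hcU : c ∈ A ∪ B
        · refine ⟨A ∪ B, ⟨by simp, hcU⟩, ?_⟩
          rintro p ⟨hp, hcp⟩
          simp only [Finset.mem_insert, Finset.mem_erase] at hp
          rcases hp with rfl | hp
          · rfl
          · rcases Finset.mem_union.1 hcU with h | h
            · exact absurd (τ.eq_of_mem_parts hp.2.2 hA hcp h) hp.2.1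
            · exact absurd (τ.eq_of_mem_parts hp.2.2 hB hcp h) hp.1
        · rw [Finset.mem_union, not_or] at hcU
          refine ⟨τ.part c, ⟨?_, τ.mem_part hc⟩, ?_⟩
          · simp only [Finset.mem_insert, Finset.mem_erase]
            right
            refine ⟨?_, ?_, τ.part_mem.2 hc⟩
            · intro h; exact hcU.2 (h ▸ τ.mem_part hc)
            · intro h; exact hcU.1 (h ▸ τ.mem_part hc)
          · rintro p ⟨hp, hcp⟩
            simp only [Finset.mem_insert, Finset.mem_erase] at hp
            rcases hp with rfl | hp
            · exact absurd (Finset.mem_union.1 hcp) (by tauto)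
            · exact (τ.part_eq_of_mem hp.2.2 hcp).symm)
      (by
        intro h
        simp only [Finset.mem_insert, Finset.mem_erase] at h
        rcases h with h | h
        · have : a ∈ (∅ : Finset ℕ) := h ▸ Finset.mem_union_left _ haA
          simp at this
        · exact τ.ne_empty h.2.2 rfl)
    have hparts : τ'.parts = insert (A ∪ B) ((τ.parts.erase A).erase B) := rfl
    have hUmem : A ∪ B ∈ τ'.parts := by rw [hparts]; simp
    refine ⟨τ', ?_, ?_, ?_⟩
    · intro π
      constructor
      · intro h
        constructor
        · intro P hP
          by_cases hPA : P = A ∨ P = B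
          · obtain ⟨c, hc, hUc⟩ := h hUmem
            refine ⟨c, hc, le_trans ?_ hUc⟩
            rcases hPA with rfl | rfl
            · exact Finset.subset_union_left
            · exact Finset.subset_union_right
          · apply h
            rw [hparts]
            simp only [Finset.mem_insert, Finset.mem_erase]
            tauto
        · obtain ⟨c, hc, hUc⟩ := h hUmem
          exact π.mem_part_iff_exists.2 ⟨c, hc, hUc (Finset.mem_union_right _ hbB),
            hUc (Finset.mem_union_left _ haA)⟩
      · rintro ⟨h, hbπ⟩ P hP
        rw [hparts] at hP
        simp only [Finset.mem_insert, Finset.mem_erase] at hP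
        rcases hP with rfl | hP
        · refine ⟨π.part a, π.part_mem.2 ha, ?_⟩
          apply Finset.union_subset
          · rw [← hAdef]; exact fp_le_part h
          · rw [← hBdef, ← (π.mem_part_iff_part_eq_part hb ha).1 hbπ]
            exact fp_le_part h
        · exact h hP.2.2
    · exact τ'.part_eq_of_mem hUmem (Finset.mem_union_left _ haA)
    · rw [if_neg hab, hparts, Finset.card_insert_of_notMem hU, Finset.card_erase_of_mem,
        Finset.card_erase_of_mem hA]
      · have : 1 < τ.parts.card := Finset.one_lt_card.2 ⟨B, hB, A, hA, hne⟩
        omega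
      · exact Finset.mem_erase.2 ⟨hne, hB⟩

lemma fp_part_sum {s : Finset ℕ} (τ : Finpartition s) (a : ℕ) (ha : a ∈ s) :
    ∑ π : Finpartition s, (if τ ≤ π then fpW π * ((π.part a).card : ℝ) else 0)
      = (if τ.parts.card = 1 then (s.card : ℝ) else 0) +
        (if τ.parts.card = 2 then (s.card : ℝ) - (τ.part a).card else 0) := by
  have h1 : ∀ π : Finpartition s, (if τ ≤ π then fpW π * ((π.part a).card : ℝ) else 0)
      = ∑ x ∈ s, if τ ≤ π ∧ x ∈ π.part a then fpW π else 0 := by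
    intro π
    by_cases h : τ ≤ π
    · simp only [h, true_and, if_true]
      rw [← Finset.sum_filter, Finset.filter_mem_eq_inter,
        Finset.inter_eq_right.2 (π.part_subset a), Finset.sum_const, nsmul_eq_mul, mul_comm]
    · simp [h]
  simp only [h1]
  rw [Finset.sum_comm]
  have h2 : ∀ x ∈ s, ∑ π : Finpartition s, (if τ ≤ π ∧ x ∈ π.part a then fpW π else 0)
      = if x ∈ τ.part a then (if τ.parts.card = 1 then (1 : ℝ) else 0)
        else (if τ.parts.card = 2 then 1 else 0) := by
    intro x hx
    obtain ⟨τ', h, -, hc⟩ := fp_merge τ a x ha hx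
    simp only [← h]
    rw [fp_sum ⟨a, ha⟩, hc]
    by_cases hxa : x ∈ τ.part a
    · simp [hxa]
    · simp only [hxa, if_false]
      congr 1
      exact propext (by omega)
  rw [Finset.sum_congr rfl h2, Finset.sum_ite, Finset.sum_const, Finset.sum_const,
    Finset.filter_mem_eq_inter, Finset.inter_eq_right.2 (τ.part_subset a),
    Finset.filter_not, Finset.filter_mem_eq_inter, Finset.inter_eq_right.2 (τ.part_subset a),
    Finset.card_sdiff_of_subset (τ.part_subset a), nsmul_eq_mul, nsmul_eq_mul,
    Nat.cast_sub (Finset.card_le_card (τ.part_subset a))]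
  by_cases h1 : τ.parts.card = 1
  · obtain ⟨P, hP⟩ := Finset.card_eq_one.1 h1
    have : τ.part a = s := by
      have h3 := τ.biUnion_parts
      have h4 := τ.part_mem.2 ha
      rw [hP] at h3 h4
      rw [Finset.mem_singleton.1 h4]
      simpa using h3
    simp [h1, this]
  · simp [h1]

/-- Computation of the coefficients `b^σ_k` in the cluster hierarchy:
`b^σ_k` is the sum of `(-1)^(|π|-1)(|π|-1)!·(N − |B_π| + 1)/N` over all coarsenings `π`
of `σ` in which `k` and `*` lie in the same block `B_π`.  Here the common block sum is
realized by summing over the blocks of `π` containing both `k` and `*` (there is at most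
one such block).  With `Q` (resp. `R`) the block of `σ` containing `k` (resp. `*`):
if `|σ| = 1` then `b = (N−j)/N`; if `|σ| = 2` then `b = −(j+1−|Q|)/N` when `Q = R` and
`b = (N−j)/N` when `Q ≠ R`; if `|σ| = 3` then `b = 0` when `Q = R` and
`b = −(j+1−|Q|−|R|)/N` when `Q ≠ R`; and `b = 0` whenever `|σ| ≥ 4`. -/
theorem coefficient_b_formula (N : ℝ) (hN : N ≠ 0) (j : ℕ) (hj : 1 ≤ j)
    (star : ℕ) (hstar : star ∉ Finset.Icc 1 j)
    (σ : Finpartition (insert star (Finset.Icc 1 j)))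
    (k : ℕ) (hk : k ∈ Finset.Icc 1 j)
    (Q R : Finset ℕ) (hQ : Q ∈ σ.parts) (hkQ : k ∈ Q) (hR : R ∈ σ.parts) (hsR : star ∈ R)
    (b : ℝ)
    (hb : b = ∑ π : Finpartition (insert star (Finset.Icc 1 j)),
      if σ ≤ π then
        ∑ B ∈ π.parts.filter (fun B => k ∈ B ∧ star ∈ B),
          (-1 : ℝ) ^ (π.parts.card - 1) * (Nat.factorial (π.parts.card - 1) : ℝ) *
            ((N - (B.card : ℝ) + 1) / N)
      else 0) :
    (σ.parts.card = 1 → b = (N - j) / N) ∧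
    (σ.parts.card = 2 →
      (Q = R → b = -(((j : ℝ) + 1 - Q.card) / N)) ∧ (Q ≠ R → b = (N - j) / N)) ∧
    (σ.parts.card = 3 →
      (Q = R → b = 0) ∧ (Q ≠ R → b = -(((j : ℝ) + 1 - Q.card - R.card) / N))) ∧
    (4 ≤ σ.parts.card → b = 0) := by
  have hks : k ∈ insert star (Finset.Icc 1 j) := Finset.mem_insert_of_mem hk
  have hss : star ∈ insert star (Finset.Icc 1 j) := Finset.mem_insert_self _ _
  have hcard : (insert star (Finset.Icc 1 j)).card = j + 1 := by
    rw [Finset.card_insert_of_notMem hstar]; simp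
  generalize insert star (Finset.Icc 1 j) = s at *
  obtain ⟨τ, hτ, hpart, hτc⟩ := fp_merge σ k star hks hss
  have hQ' := σ.part_eq_of_mem hQ hkQ
  have hR' := σ.part_eq_of_mem hR hsR
  rw [hQ', hR'] at hpart
  rw [hQ'] at hτc
  have hterm : ∀ π : Finpartition s, (if σ ≤ π then
        ∑ B ∈ π.parts.filter (fun B => k ∈ B ∧ star ∈ B),
          (-1 : ℝ) ^ (π.parts.card - 1) * (Nat.factorial (π.parts.card - 1) : ℝ) *
            ((N - (B.card : ℝ) + 1) / N)
      else 0) = (N + 1) / N * (if τ ≤ π then fpW π else 0)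
        - 1 / N * (if τ ≤ π then fpW π * ((π.part k).card : ℝ) else 0) := by
    intro π
    simp only [hτ]
    by_cases h : σ ≤ π
    · by_cases hs : star ∈ π.part k
      · have : π.parts.filter (fun B => k ∈ B ∧ star ∈ B) = {π.part k} := by
          ext B
          simp only [Finset.mem_filter, Finset.mem_singleton]
          constructor
          · rintro ⟨hB, hkB, -⟩
            exact (π.part_eq_of_mem hB hkB).symm
          · rintro rfl
            exact ⟨π.part_mem.2 hks, π.mem_part hks, hs⟩
        simp only [h, hs, this, Finset.sum_singleton, and_self, if_true, fpW]
        ring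
      · have : π.parts.filter (fun B => k ∈ B ∧ star ∈ B) = ∅ := by
          apply Finset.filter_eq_empty_iff.2
          rintro B hB ⟨h1, h2⟩
          exact hs (π.mem_part_iff_exists.2 ⟨B, hB, h2, h1⟩)
        simp [hs, this]
    · simp [h]
  rw [Finset.sum_congr rfl (fun π _ => hterm π), Finset.sum_sub_distrib, ← Finset.mul_sum,
    ← Finset.mul_sum, fp_sum ⟨k, hks⟩, fp_part_sum τ k hks, hpart, hcard] at hb
  by_cases hQR : Q = R
  · subst hQR
    rw [if_pos hsR] at hτc
    rw [hτc, Finset.union_self] at hb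
    refine ⟨fun h => ?_, fun h => ⟨fun _ => ?_, fun h' => absurd rfl h'⟩,
      fun h => ⟨fun _ => ?_, fun h' => absurd rfl h'⟩, fun h => ?_⟩
    · simp only [h] at hb
      rw [hb]; push_cast; norm_num; ring
    · simp only [h] at hb
      rw [hb]; push_cast; norm_num; ring
    · simp only [h] at hb
      rw [hb]; norm_num
    · have h1 : σ.parts.card ≠ 1 := by omega
      have h2 : σ.parts.card ≠ 2 := by omega
      rw [hb]; simp [h1, h2]
  · have hsQ : star ∉ Q := fun h => hQR (σ.eq_of_mem_parts hQ hR h hsR)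
    have hdis : Disjoint Q R := σ.disjoint hQ hR hQR
    have hlt : 1 < σ.parts.card := Finset.one_lt_card.2 ⟨Q, hQ, R, hR, hQR⟩
    rw [if_neg hsQ] at hτc
    rw [hτc, Finset.card_union_of_disjoint hdis] at hb
    refine ⟨fun h => by omega, fun h => ⟨fun h' => absurd h' hQR, fun _ => ?_⟩,
      fun h => ⟨fun h' => absurd h' hQR, fun _ => ?_⟩, fun h => ?_⟩
    · simp only [h] at hb
      rw [hb]; push_cast; norm_num; ring
    · simp only [h] at hb
      rw [hb]; push_cast; norm_num; ring
    · have h1 : σ.parts.card - 1 ≠ 1 := by omega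
      have h2 : σ.parts.card - 1 ≠ 2 := by omega
      rw [hb]; simp only [h1, h2, if_false]; simp
end

section
/- Let i ≥ 1 be an integer. There exists a constant C, depending only on i, such that for every integer j ≥ 1: Σ_{m=1}^{2i} Σ_{ℓ=1}^{j} Σ_{k=1}^{j} #{ (P,R) : P, R ⊆ [j], |P| = |R| = m, ℓ ∈ P ∪ R ∪ {1,k}, k ∈ P ∪ R ∪ {1,ℓ}, P ⊆ R ∪ {1,ℓ,k}, R ⊆ P ∪ {1,ℓ,k} } ≤ C · j^{2i+1}. -/
lemma aux_card (m l k : ℕ) (P R : Finset ℕ) (hP : P.card = m) (hR : R.card = m)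
    (hl : l ∈ P ∪ R ∪ {1, k}) (hk : k ∈ P ∪ R ∪ {1, l})
    (hPR : P ⊆ R ∪ {1, l, k}) (hRP : R ⊆ P ∪ {1, l, k}) :
    ((P ∪ R ∪ {l, k}).erase 1).card ≤ m + 1 := by
  have h1 : (P \ R).card + R.card = (P ∪ R).card := Finset.card_sdiff_add_card P R
  have h2 : (R \ P).card + P.card = (R ∪ P).card := Finset.card_sdiff_add_card R P
  rw [Finset.union_comm R P] at h2
  have hdis : Disjoint (P \ R) (R \ P) := disjoint_sdiff_sdiff
  have h3 := Finset.card_union_of_disjoint hdis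
  by_cases hc : l ∈ P ∪ R ∪ {1} ∧ k ∈ P ∪ R ∪ {1}
  · have hs : (P ∪ R ∪ {l, k}).erase 1 ⊆ P ∪ R := by
      intro x hx
      simp only [Finset.mem_erase, Finset.mem_union, Finset.mem_insert,
        Finset.mem_singleton] at hx hc ⊢
      grind
    have h4 := Finset.card_le_card hs
    have hs2 : (P \ R) ∪ (R \ P) ⊆ {1, l, k} := by
      intro x hx
      have a := @hPR x
      have b := @hRP x
      simp only [Finset.mem_sdiff, Finset.mem_union, Finset.mem_insert,
        Finset.mem_singleton] at hx a b ⊢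
      tauto
    have h5 := Finset.card_le_card hs2
    have h6 : ({1, l, k} : Finset ℕ).card ≤ 3 := Finset.card_le_three
    omega
  · have hlk : l = k ∧ l ∉ P ∪ R := by
      simp only [Finset.mem_union, Finset.mem_insert, Finset.mem_singleton] at hl hk hc ⊢
      grind
    obtain ⟨rfl, hn⟩ := hlk
    have hs : (P ∪ R ∪ {l, l}).erase 1 ⊆ insert l (P ∪ R) := by
      intro x hx
      simp only [Finset.mem_erase, Finset.mem_union, Finset.mem_insert,
        Finset.mem_singleton] at hx ⊢
      tauto
    have h4 := (Finset.card_le_card hs).trans (Finset.card_insert_le _ _)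
    have hs2 : (P \ R) ∪ (R \ P) ⊆ {1} := by
      intro x hx
      have a := @hPR x
      have b := @hRP x
      simp only [Finset.mem_sdiff, Finset.mem_union, Finset.mem_insert,
        Finset.mem_singleton] at hx a b hn ⊢
      grind
    have h5 := Finset.card_le_card hs2
    rw [Finset.card_singleton] at h5
    omega

lemma aux_enum (n j : ℕ) (hj : 1 ≤ j) (W : Finset ℕ) (hW : W.card ≤ n)
    (hWj : W ⊆ Finset.Icc 1 j) :
    ∃ f ∈ Fintype.piFinset (fun _ : Fin n => Finset.Icc 1 j),
      W ⊆ Finset.univ.image f := by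
  refine ⟨fun t => if h : (t : ℕ) < W.card then (W.equivFin.symm ⟨t, h⟩ : ℕ) else 1, ?_, ?_⟩
  · rw [Fintype.mem_piFinset]
    intro t
    split_ifs with h
    · exact hWj (W.equivFin.symm ⟨t, h⟩).2
    · simp [hj]
  · intro x hx
    rw [Finset.mem_image]
    refine ⟨⟨W.equivFin ⟨x, hx⟩, lt_of_lt_of_le (W.equivFin ⟨x, hx⟩).2 hW⟩, Finset.mem_univ _, ?_⟩
    simp

lemma aux_level (i m j : ℕ) (hm : m ≤ 2 * i) (hj : 1 ≤ j) :
    (∑ l ∈ Finset.Icc 1 j, ∑ k ∈ Finset.Icc 1 j,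
        (((Finset.Icc 1 j).powerset ×ˢ (Finset.Icc 1 j).powerset).filter
          (fun PR => PR.1.card = m ∧ PR.2.card = m ∧
            l ∈ PR.1 ∪ PR.2 ∪ {1, k} ∧ k ∈ PR.1 ∪ PR.2 ∪ {1, l} ∧
            PR.1 ⊆ PR.2 ∪ {1, l, k} ∧ PR.2 ⊆ PR.1 ∪ {1, l, k})).card)
      ≤ j ^ (2 * i + 1) *
        ((2 * i + 2) * ((2 * i + 2) * (2 ^ (2 * i + 2) * 2 ^ (2 * i + 2)))) := by
  classical
  simp_rw [← Finset.card_sigma]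
  let V : (Fin (2 * i + 1) → ℕ) → Finset ℕ := fun f => insert 1 (Finset.univ.image f)
  have hV : ∀ f, (V f).card ≤ 2 * i + 2 := by
    intro f
    refine (Finset.card_insert_le _ _).trans ?_
    have := Finset.card_image_le (s := Finset.univ) (f := f)
    simp only [Finset.card_univ, Fintype.card_fin] at this
    omega
  let F := Fintype.piFinset (fun _ : Fin (2 * i + 1) => Finset.Icc 1 j)
  have hF : F.card = j ^ (2 * i + 1) := by simp [F]
  rw [← hF]
  refine (Finset.card_le_card (t := F.biUnion (fun f => (V f).sigma (fun _ => (V f).sigma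
    (fun _ => (V f).powerset ×ˢ (V f).powerset)))) ?_).trans
    (Finset.card_biUnion_le_card_mul _ _ _ ?_)
  · rintro ⟨l, k, P, R⟩ h
    simp only [Finset.mem_sigma, Finset.mem_filter, Finset.mem_product,
      Finset.mem_powerset] at h
    obtain ⟨hl, hk, ⟨hPj, hRj⟩, hP, hR, h1, h2, h3, h4⟩ := h
    have hc := aux_card m l k P R hP hR h1 h2 h3 h4
    obtain ⟨f, hf, hsub⟩ := aux_enum (2 * i + 1) j hj _ (hc.trans (by omega)) (by
      refine (Finset.erase_subset _ _).trans ?_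
      refine Finset.union_subset (Finset.union_subset hPj hRj) ?_
      intro x hx
      simp only [Finset.mem_insert, Finset.mem_singleton] at hx
      rcases hx with rfl | rfl <;> assumption)
    have hall : P ∪ R ∪ {l, k} ⊆ V f := by
      intro x hx
      by_cases h : x = 1
      · exact Finset.mem_insert.2 (Or.inl h)
      · exact Finset.mem_insert_of_mem (hsub (Finset.mem_erase.2 ⟨h, hx⟩))
    rw [Finset.mem_biUnion]
    refine ⟨f, hf, ?_⟩
    simp only [Finset.mem_sigma, Finset.mem_product, Finset.mem_powerset]
    refine ⟨hall (by simp), hall (by simp), fun x hx => hall (by simp [hx]),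
      fun x hx => hall (by simp [hx])⟩
  · intro f _
    simp only [Finset.card_sigma, Finset.sum_const, smul_eq_mul, Finset.card_product,
      Finset.card_powerset]
    have := hV f
    gcongr <;> first | exact this | norm_num

/-- Counting bound underlying the optimal-in-`j` remainder estimate: for each `i ≥ 1`
there is a constant `C`, depending only on `i`, such that for all `j ≥ 1`,
`Σ_{m=1}^{2i} Σ_{ℓ=1}^{j} Σ_{k=1}^{j} #{(P,R) : P,R ⊆ [j], |P| = |R| = m,
ℓ ∈ P∪R∪{1,k}, k ∈ P∪R∪{1,ℓ}, P ⊆ R∪{1,ℓ,k}, R ⊆ P∪{1,ℓ,k}} ≤ C·j^{2i+1}`. -/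
theorem pair_counting_bound (i : ℕ) (hi : 1 ≤ i) :
    ∃ C : ℕ, ∀ j : ℕ, 1 ≤ j →
      (∑ m ∈ Finset.Icc 1 (2 * i), ∑ l ∈ Finset.Icc 1 j, ∑ k ∈ Finset.Icc 1 j,
        (((Finset.Icc 1 j).powerset ×ˢ (Finset.Icc 1 j).powerset).filter
          (fun PR => PR.1.card = m ∧ PR.2.card = m ∧
            l ∈ PR.1 ∪ PR.2 ∪ {1, k} ∧ k ∈ PR.1 ∪ PR.2 ∪ {1, l} ∧
            PR.1 ⊆ PR.2 ∪ {1, l, k} ∧ PR.2 ⊆ PR.1 ∪ {1, l, k})).card)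
        ≤ C * j ^ (2 * i + 1) := by
  refine ⟨2 * i * ((2 * i + 2) * ((2 * i + 2) * (2 ^ (2 * i + 2) * 2 ^ (2 * i + 2)))), ?_⟩
  intro j hj
  refine (Finset.sum_le_card_nsmul _ _ _ (fun m hm =>
    aux_level i m j (Finset.mem_Icc.1 hm).2 hj)).trans (le_of_eq ?_)
  simp only [Nat.card_Icc, smul_eq_mul, Nat.add_sub_cancel]
  ring
end
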